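/- Strong forward Brascamp–Lieb inequality (two-function version with envelopes): let α ∈ [0,α_max], β ∈ [0,β_max], and let p*, q* ∈ [0,∞] be such that (1/p*, 1/q*) is a subgradient of Θ̲ at (α,β). Then for every p, q ∈ (0,∞), every n ≥ 1, and all measurable f : 𝒳ⁿ → [0,∞), g : 𝒴ⁿ → [0,∞) (neither a.e. zero) such that (1/n) Ent_{p,p*}(f) ≥ α if p ≥ p* and (1/n) Ent_{p,p*}(f) ≤ α if p ≤ p*, and likewise (1/n) Ent_{q,q*}(g) ≥ β if q ≥ q* and ≤ β if q ≤ q*, one has ⟨f,g⟩ ≤ exp(−n (Θ̲(α,β) − α/p − β/q)) · ‖f‖_p ‖g‖_q. -/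

import Mathlib

open MeasureTheory ProbabilityTheory Set Filter
open scoped ENNReal NNReal BigOperators Classical Topology

noncomputable section

namespace BL

variable {X : Type*} {Y : Type*} [MeasurableSpace X] [MeasurableSpace Y]

/-! ### Extended logarithm, exponential, and division conventions -/

/-- Extended logarithm `ℝ≥0∞ → EReal`, with `log 0 = ⊥` and `log ⊤ = ⊤`. -/
def elog (x : ℝ≥0∞) : EReal :=
  if x = 0 then ⊥ else if x = ⊤ then ⊤ else ((Real.log x.toReal : ℝ) : EReal)

/-- Extended exponential `EReal → ℝ≥0∞`, with `exp ⊥ = 0` and `exp ⊤ = ⊤`. -/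
def eexp (x : EReal) : ℝ≥0∞ :=
  if x = ⊥ then 0 else if x = ⊤ then ⊤ else ENNReal.ofReal (Real.exp x.toReal)

/-- Division of an extended real by a real, with the conventions `a/0 = +∞` for `a > 0`,
`a/0 = -∞` for `a < 0` and `0/0 = 0`. -/
def ediv (x : EReal) (c : ℝ) : EReal :=
  if c = 0 then (if 0 < x then ⊤ else if x < 0 then ⊥ else 0)
  else x * ((c⁻¹ : ℝ) : EReal)

/-- Division of a real by an extended real, with the convention `t/(±∞) = 0`. -/
def divE (t : ℝ) (r : EReal) : EReal :=
  if r = ⊤ ∨ r = ⊥ then 0 else ((t / r.toReal : ℝ) : EReal)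

/-- Hölder conjugate, as an extended real (`conj 1 = ⊤`). -/
def conj (q : ℝ) : EReal := if q = 1 then ⊤ else ((q / (q - 1) : ℝ) : EReal)

/-! ### Norms with a real (possibly negative) exponent -/

/-- `p`-"norm" of an `ℝ≥0∞`-valued function (`p` a nonzero real). -/
def enorm (P : Measure X) (F : X → ℝ≥0∞) (p : ℝ) : ℝ≥0∞ :=
  (∫⁻ x, F x ^ p ∂P) ^ (1 / p)

/-- `∞`-norm (essential supremum) of an `ℝ≥0∞`-valued function. -/
def enormInf (P : Measure X) (F : X → ℝ≥0∞) : ℝ≥0∞ := essSup F P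

/-- `p`-"norm" of a nonnegative real-valued function. -/
def rnorm (P : Measure X) (f : X → ℝ) (p : ℝ) : ℝ≥0∞ :=
  enorm P (fun x => ENNReal.ofReal (f x)) p

/-- `∞`-norm of a nonnegative real-valued function. -/
def rnormInf (P : Measure X) (f : X → ℝ) : ℝ≥0∞ :=
  enormInf P (fun x => ENNReal.ofReal (f x))

/-! ### Divergences -/

/-- Kullback--Leibler divergence, valued in `EReal` (equal to `⊤` when undefined). -/
def KL (Q P : Measure X) : EReal :=
  if Q ≪ P ∧ Integrable (fun x => Real.log (Q.rnDeriv P x).toReal) Q then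
    ((∫ x, Real.log (Q.rnDeriv P x).toReal ∂Q : ℝ) : EReal)
  else ⊤

/-- Rényi divergence of order `s` (`s = 1` gives the KL divergence). -/
def Renyi (s : ℝ) (Q P : Measure X) : EReal :=
  if s = 1 then KL Q P
  else (((s - 1)⁻¹ : ℝ) : EReal) *
    elog (∫⁻ x, Q.rnDeriv (Q + P) x ^ s * P.rnDeriv (Q + P) x ^ (1 - s) ∂(Q + P))

/-- First marginal of a measure on a product space. -/
def m1 (P : Measure (X × Y)) : Measure X := P.map Prod.fst

/-- Second marginal of a measure on a product space. -/
def m2 (P : Measure (X × Y)) : Measure Y := P.map Prod.snd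

/-- Couplings of a pair of (probability) measures. -/
def couplings (μ : Measure X) (ν : Measure Y) : Set (Measure (X × Y)) :=
  {π | IsProbabilityMeasure π ∧ π.map Prod.fst = μ ∧ π.map Prod.snd = ν}

/-- `𝔻(QX, QY ‖ P)` : minimum relative entropy over couplings. -/
def Dmin (QX : Measure X) (QY : Measure Y) (P : Measure (X × Y)) : EReal :=
  ⨅ (π : Measure (X × Y)) (_ : π ∈ couplings QX QY), KL π P

/-! ### The functions φ and their envelopes -/

/-- `φ̲(s,t)`. -/
def phiL (P : Measure (X × Y)) (s t : ℝ) : EReal :=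
  ⨅ (QX : Measure X) (QY : Measure Y) (_ : IsProbabilityMeasure QX)
    (_ : IsProbabilityMeasure QY) (_ : QX ≪ m1 P) (_ : QY ≪ m2 P)
    (_ : KL QX (m1 P) = (s : EReal)) (_ : KL QY (m2 P) = (t : EReal)),
    Dmin QX QY P

/-- `φ̄(s,t)`. -/
def phiU (P : Measure (X × Y)) (s t : ℝ) : EReal :=
  ⨆ (QX : Measure X) (QY : Measure Y) (_ : IsProbabilityMeasure QX)
    (_ : IsProbabilityMeasure QY) (_ : QX ≪ m1 P) (_ : QY ≪ m2 P)
    (_ : KL QX (m1 P) = (s : EReal)) (_ : KL QY (m2 P) = (t : EReal)),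
    Dmin QX QY P

/-- Lower convex envelope on `[0,∞)²`, via convex combinations of (at most) 4 points
(Carathéodory). -/
def lce2 (F : ℝ → ℝ → EReal) (a b : ℝ) : EReal :=
  ⨅ (q : Fin 4 → ℝ) (x : Fin 4 → ℝ × ℝ) (_ : ∀ i, 0 ≤ q i) (_ : ∑ i, q i = 1)
    (_ : ∀ i, 0 ≤ (x i).1 ∧ 0 ≤ (x i).2)
    (_ : ∑ i, q i * (x i).1 = a) (_ : ∑ i, q i * (x i).2 = b),
    ∑ i, (q i : EReal) * F (x i).1 (x i).2

/-- Upper concave envelope on `[0,∞)²`. -/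
def uce2 (F : ℝ → ℝ → EReal) (a b : ℝ) : EReal :=
  ⨆ (q : Fin 4 → ℝ) (x : Fin 4 → ℝ × ℝ) (_ : ∀ i, 0 ≤ q i) (_ : ∑ i, q i = 1)
    (_ : ∀ i, 0 ≤ (x i).1 ∧ 0 ≤ (x i).2)
    (_ : ∑ i, q i * (x i).1 = a) (_ : ∑ i, q i * (x i).2 = b),
    ∑ i, (q i : EReal) * F (x i).1 (x i).2

/-- Lower convex envelope on `[0,∞)`. -/
def lce1 (F : ℝ → EReal) (a : ℝ) : EReal :=
  ⨅ (q : Fin 3 → ℝ) (x : Fin 3 → ℝ) (_ : ∀ i, 0 ≤ q i) (_ : ∑ i, q i = 1)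
    (_ : ∀ i, 0 ≤ x i) (_ : ∑ i, q i * x i = a),
    ∑ i, (q i : EReal) * F (x i)

/-- Upper concave envelope on `[0,∞)`. -/
def uce1 (F : ℝ → EReal) (a : ℝ) : EReal :=
  ⨆ (q : Fin 3 → ℝ) (x : Fin 3 → ℝ) (_ : ∀ i, 0 ≤ q i) (_ : ∑ i, q i = 1)
    (_ : ∀ i, 0 ≤ x i) (_ : ∑ i, q i * x i = a),
    ∑ i, (q i : EReal) * F (x i)

/-- `Θ̲(α,β)`: increasing lower convex envelope of `φ̲`. -/
def ThetaL (P : Measure (X × Y)) (α β : ℝ) : EReal :=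
  ⨅ (s : ℝ) (t : ℝ) (_ : α ≤ s) (_ : β ≤ t), lce2 (phiL P) s t

/-- `Θ̄(α,β)`: increasing upper concave envelope of `φ̄`. -/
def ThetaU (P : Measure (X × Y)) (α β : ℝ) : EReal :=
  ⨆ (s : ℝ) (t : ℝ) (_ : 0 ≤ s) (_ : s ≤ α) (_ : 0 ≤ t) (_ : t ≤ β), uce2 (phiU P) s t

/-- `φ_r(s) = inf_{t ≥ 0} (φ̲(s,t) - t/r)` for `r ∈ [1,∞]` (`r` an extended real). -/
def phiRinf (P : Measure (X × Y)) (r : EReal) (s : ℝ) : EReal :=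
  ⨅ (t : ℝ) (_ : 0 ≤ t), phiL P s t - divE t r

/-- `Θ_r(α)` for `r ∈ [1,∞]`. -/
def ThetaGe1 (P : Measure (X × Y)) (r : EReal) (α : ℝ) : EReal :=
  ⨅ (s : ℝ) (_ : α ≤ s), lce1 (phiRinf P r) s

/-- `φ_r(s) = sup_{t ≥ 0} (φ̄(s,t) - t/r)` for `r ∈ (0,1)`. -/
def phiSupR (P : Measure (X × Y)) (r : ℝ) (s : ℝ) : EReal :=
  ⨆ (t : ℝ) (_ : 0 ≤ t), phiU P s t - divE t (r : EReal)

/-- `φ_r(s)` for `r < 0`. -/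
def phiNeg (P : Measure (X × Y)) (r : ℝ) (s : ℝ) : EReal :=
  ⨆ (QX : Measure X) (_ : IsProbabilityMeasure QX) (_ : QX ≪ m1 P)
    (_ : KL QX (m1 P) = (s : EReal)),
    ⨅ (QY : Measure Y) (_ : IsProbabilityMeasure QY) (_ : QY ≪ m2 P),
      Dmin QX QY P - ediv (KL QY (m2 P)) r

/-- `φ_r(s)` for `r < 1`, `r ≠ 0`. -/
def phiLT1 (P : Measure (X × Y)) (r : ℝ) (s : ℝ) : EReal :=
  if 0 < r then phiSupR P r s else phiNeg P r s

/-- `Θ_r(α)` for `r < 1`, `r ≠ 0`. -/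
def ThetaLT1 (P : Measure (X × Y)) (r : ℝ) (α : ℝ) : EReal :=
  ⨆ (s : ℝ) (_ : 0 ≤ s) (_ : s ≤ α), uce1 (phiLT1 P r) s

/-- `α_max = sup {-log μ(A) : μ(A) > 0}`. -/
def alphaMax (μ : Measure X) : EReal :=
  ⨆ (A : Set X) (_ : MeasurableSet A) (_ : μ A ≠ 0), -elog (μ A)

/-! ### Entropies -/

/-- `Ent_{p,p}(f)`. -/
def entPP (P : Measure X) (f : X → ℝ) (p : ℝ) : EReal :=
  (((∫ x, f x ^ p * Real.log (f x ^ p) ∂P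
      - (∫ x, f x ^ p ∂P) * Real.log (∫ x, f x ^ p ∂P))
     / (∫ x, f x ^ p ∂P) : ℝ) : EReal)

/-- `Ent_{p,p̂}(f)` for a nonzero real `p` and a real `p̂`. -/
def ent (P : Measure X) (f : X → ℝ) (p phat : ℝ) : EReal :=
  if phat = p then entPP P f p
  else if phat = 0 then -elog (P {x | 0 < f x})
  else ((p * phat / (p - phat) : ℝ) : EReal) * (elog (rnorm P f p) - elog (rnorm P f phat))

/-- `Ent_{p,∞}(f)` for a nonzero real `p`. -/
def entTop (P : Measure X) (f : X → ℝ) (p : ℝ) : EReal :=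
  if rnormInf P f = ⊤ then (if 0 < p then ⊤ else ⊥)
  else ((-p : ℝ) : EReal) * (elog (rnorm P f p) - elog (rnormInf P f))

/-- `Ent_{p,p*}(f)` for a nonzero real `p` and `p* ∈ [0,∞]`. -/
def entE (P : Measure X) (f : X → ℝ) (p : ℝ) (ps : ℝ≥0∞) : EReal :=
  if ps = ⊤ then entTop P f p else ent P f p ps.toReal

/-- Admissible functions: measurable, nonnegative, not a.e. zero. -/
def Adm (P : Measure X) (f : X → ℝ) : Prop :=
  Measurable f ∧ (∀ x, 0 ≤ f x) ∧ ¬ f =ᵐ[P] (fun _ => 0)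

/-! ### Products -/

/-- `n`-fold product measure. -/
def piM (n : ℕ) (P : Measure X) : Measure (Fin n → X) := Measure.pi fun _ => P

def fstv {n : ℕ} (z : Fin n → X × Y) : Fin n → X := fun i => (z i).1
def sndv {n : ℕ} (z : Fin n → X × Y) : Fin n → Y := fun i => (z i).2

/-- `⟨f,g⟩ = ∫ f(xⁿ) g(yⁿ) dP^{⊗n}`. -/
def innerFG (P : Measure (X × Y)) (n : ℕ) (f : (Fin n → X) → ℝ) (g : (Fin n → Y) → ℝ) :
    ℝ≥0∞ :=
  ∫⁻ z, ENNReal.ofReal (f (fstv z)) * ENNReal.ofReal (g (sndv z)) ∂(piM n P)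

/-- The set `A × B` viewed inside `(X × Y)ⁿ`. -/
def prodSet {n : ℕ} (A : Set (Fin n → X)) (B : Set (Fin n → Y)) : Set (Fin n → X × Y) :=
  {z | fstv z ∈ A ∧ sndv z ∈ B}

/-! ### Kernels -/

/-- Product of kernel measures `⊗ᵢ κ(yᵢ)`. -/
def kpi {n : ℕ} (κ : Kernel Y X) (y : Fin n → Y) : Measure (Fin n → X) :=
  Measure.pi fun i => κ (y i)

/-- The conditional expectation operator `P_{X|Y}^{⊗n}(f)`. -/
def condOp {n : ℕ} (κ : Kernel Y X) (f : (Fin n → X) → ℝ) : (Fin n → Y) → ℝ≥0∞ :=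
  fun y => ∫⁻ x, ENNReal.ofReal (f x) ∂(kpi κ y)

/-- `κ` is a regular conditional probability of the first coordinate given the second. -/
def IsCondKernel (P : Measure (X × Y)) (κ : Kernel Y X) : Prop :=
  ∀ (A : Set X) (B : Set Y), MeasurableSet A → MeasurableSet B →
    P (A ×ˢ B) = ∫⁻ y in B, κ y A ∂(m2 P)

/-! ### η and `Λ̲*` -/

/-- The function `η_{p,p̂}(α,s)`. -/
def eta (p phat α : ℝ) (s : EReal) : EReal :=
  if 0 ≤ p ∧ 0 ≤ phat then max (ediv ((α : EReal) - s) p) (ediv ((α : EReal) - s) phat)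
  else if 0 < p ∧ phat < 0 then ediv ((α : EReal) - s) p
  else if 0 < phat ∧ p < 0 then ediv ((α : EReal) - s) phat
  else ⊥

/-- `Λ̲*_{p,q,p̂,q̂}(α,β)` (time sharing variable of size ≤ 4). -/
def LamLstar (P : Measure (X × Y)) (p q phat qhat α β : ℝ) : EReal :=
  ⨅ (w : Fin 4 → ℝ) (QX : Fin 4 → Measure X) (QY : Fin 4 → Measure Y)
    (_ : ∀ i, 0 ≤ w i) (_ : ∑ i, w i = 1)
    (_ : ∀ i, IsProbabilityMeasure (QX i)) (_ : ∀ i, QX i ≪ m1 P)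
    (_ : ∀ i, IsProbabilityMeasure (QY i)) (_ : ∀ i, QY i ≪ m2 P),
    (∑ i, (w i : EReal) * Dmin (QX i) (QY i) P)
      + eta p phat α (∑ i, (w i : EReal) * KL (QX i) (m1 P))
      + eta q qhat β (∑ i, (w i : EReal) * KL (QY i) (m2 P))

/-! ### Sub/supergradients (slopes in `[0,∞]`) -/

def IsSubgrad2 (F : ℝ → ℝ → EReal) (α β : ℝ) (u v : ℝ≥0∞) : Prop :=
  ∀ s t : ℝ, 0 ≤ s → 0 ≤ t →
    F α β + (u : EReal) * ((s - α : ℝ) : EReal) + (v : EReal) * ((t - β : ℝ) : EReal) ≤ F s t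

def IsSupergrad2 (F : ℝ → ℝ → EReal) (α β : ℝ) (u v : ℝ≥0∞) : Prop :=
  ∀ s t : ℝ, 0 ≤ s → 0 ≤ t →
    F s t ≤ F α β + (u : EReal) * ((s - α : ℝ) : EReal) + (v : EReal) * ((t - β : ℝ) : EReal)

def IsSubgrad1 (F : ℝ → EReal) (α : ℝ) (u : ℝ≥0∞) : Prop :=
  ∀ s : ℝ, 0 ≤ s → F α + (u : EReal) * ((s - α : ℝ) : EReal) ≤ F s

def IsSupergrad1 (F : ℝ → EReal) (α : ℝ) (u : ℝ≥0∞) : Prop :=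
  ∀ s : ℝ, 0 ≤ s → F s ≤ F α + (u : EReal) * ((s - α : ℝ) : EReal)


lemma exists_sep_zero {E : Type*} [NormedAddCommGroup E] [NormedSpace ℝ E] [FiniteDimensional ℝ E]
    {C : Set E} (hC : Convex ℝ C) (hne : C.Nonempty) (h0 : (0 : E) ∉ C) :
    ∃ l : E →L[ℝ] ℝ, l ≠ 0 ∧ ((∀ x ∈ C, l x ≤ 0) ∨ ∃ r, ∀ x ∈ C, l x = r) := by
  by_cases hi : (interior C).Nonempty
  · obtain ⟨l, hl⟩ := geometric_hahn_banach_open_point hC.interior isOpen_interior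
      (fun h => h0 (interior_subset h))
    refine ⟨l, ?_, Or.inl ?_⟩
    · rintro rfl
      obtain ⟨x, hx⟩ := hi
      simpa using hl x hx
    · intro x hx
      have hcl : x ∈ closure (interior C) := by
        rw [hC.closure_interior_eq_closure_of_nonempty_interior hi]
        exact subset_closure hx
      have : closure (interior C) ⊆ {y | l y ≤ 0} := by
        apply closure_minimal
        · intro y hy
          have := hl y hy
          simp at this
          exact this.le
        · exact isClosed_le l.continuous continuous_const
      exact this hcl
  · rw [hC.interior_nonempty_iff_affineSpan_eq_top] at hi
    obtain ⟨x0, hx0⟩ := hne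
    have hdir : (affineSpan ℝ C).direction < ⊤ := by
      rw [lt_top_iff_ne_top]
      intro h
      exact hi ((AffineSubspace.direction_eq_top_iff_of_nonempty
        ⟨x0, subset_affineSpan ℝ C hx0⟩).1 h)
    obtain ⟨l, hl, hk⟩ := Submodule.exists_le_ker_of_lt_top _ hdir
    refine ⟨LinearMap.toContinuousLinearMap l, ?_, Or.inr ⟨l x0, ?_⟩⟩
    · intro h
      apply hl
      ext x
      have := congrArg (fun m : E →L[ℝ] ℝ => m x) h
      simpa using this
    · intro x hx
      have h1 : x -ᵥ x0 ∈ (affineSpan ℝ C).direction :=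
        AffineSubspace.vsub_mem_direction (subset_affineSpan ℝ C hx) (subset_affineSpan ℝ C hx0)
      have h2 := hk h1
      simp [sub_eq_zero] at h2
      simpa using h2

lemma jensen_zero {Ω : Type*} [MeasurableSpace Ω] (μ : Measure Ω) [IsProbabilityMeasure μ] :
    ∀ (n : ℕ) (E : Type) [NormedAddCommGroup E] [NormedSpace ℝ E] [FiniteDimensional ℝ E]
    (C : Set E) (_ : Convex ℝ C) (f : Ω → E) (_ : Integrable f μ) (_ : ∀ᵐ x ∂μ, f x ∈ C)
    (_ : ∫ x, f x ∂μ = 0), Module.finrank ℝ E = n → (0 : E) ∈ C := by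
  intro n
  induction n using Nat.strong_induction_on with
  | _ n ih =>
    intro E _ _ _ C hC f hf hfC hf0 hn
    by_contra h0
    have hne : C.Nonempty := by
      obtain ⟨x, hx⟩ := hfC.exists
      exact ⟨_, hx⟩
    obtain ⟨l, hl, hlC⟩ := exists_sep_zero hC hne h0
    have hinteg : ∫ x, l (f x) ∂μ = 0 := by
      rw [ContinuousLinearMap.integral_comp_comm l hf, hf0, map_zero]
    have hker : ∀ᵐ x ∂μ, l (f x) = 0 := by
      rcases hlC with h | ⟨r, h⟩
      · have h1 : 0 ≤ᵐ[μ] fun x => - l (f x) := by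
          filter_upwards [hfC] with x hx
          have := h _ hx
          simp; exact this
        have h2 := (integral_eq_zero_iff_of_nonneg_ae h1 (l.integrable_comp hf).neg).1
          (by rw [integral_neg, hinteg, neg_zero])
        filter_upwards [h2] with x hx
        simpa using hx
      · have h1 : (fun x => l (f x)) =ᵐ[μ] fun _ => r := by
          filter_upwards [hfC] with x hx using h _ hx
        have : r = 0 := by
          rw [integral_congr_ae h1] at hinteg
          simpa using hinteg
        rw [this] at h1
        exact h1
    set K := LinearMap.ker (l : E →ₗ[ℝ] ℝ) with hK
    obtain ⟨π, hπ⟩ := Submodule.exists_isCompl K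
    let pr : E →L[ℝ] K := LinearMap.toContinuousLinearMap (Submodule.projectionOnto K π hπ)
    have hpr : ∀ x, l x = 0 → ((pr x : K) : E) = x := by
      intro x hx
      have : x ∈ K := hx
      have := Submodule.projectionOnto_apply_left hπ ⟨x, this⟩
      exact congrArg Subtype.val this
    have hlt : Module.finrank ℝ K < n := by
      rw [← hn]
      apply Submodule.finrank_lt
      intro h
      apply hl
      ext x
      have : x ∈ K := h ▸ Submodule.mem_top
      simpa [hK] using this
    have := ih _ hlt K (K.subtype ⁻¹' C) (hC.linear_preimage _) (fun x => pr (f x))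
      (pr.integrable_comp hf) (by
        filter_upwards [hker, hfC] with x hx hx2
        simp only [mem_preimage, Submodule.subtype_apply]
        rw [hpr _ hx]; exact hx2) (by
        rw [ContinuousLinearMap.integral_comp_comm pr hf, hf0, map_zero]) rfl
    apply h0
    simpa using this

lemma jensen_mem {Ω : Type*} [MeasurableSpace Ω] (μ : Measure Ω) [IsProbabilityMeasure μ]
    {E : Type} [NormedAddCommGroup E] [NormedSpace ℝ E] [FiniteDimensional ℝ E]
    {C : Set E} (hC : Convex ℝ C) {f : Ω → E} (hf : Integrable f μ) (hfC : ∀ᵐ x ∂μ, f x ∈ C) :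
    ∫ x, f x ∂μ ∈ C := by
  have := jensen_zero μ _ E ((fun x => x + ∫ x, f x ∂μ) ⁻¹' C)
    (hC.translate_preimage_left _) (fun x => f x - ∫ x, f x ∂μ)
    (hf.sub (integrable_const _)) (by
      filter_upwards [hfC] with x hx
      simpa using hx) (by
      rw [integral_sub hf (integrable_const _)]; simp) rfl
  simpa using this

/-- Caratheodory in `ℝ³` with exactly four points. -/
lemma carath4 {S : Set (ℝ × ℝ × ℝ)} {x : ℝ × ℝ × ℝ} (hx : x ∈ convexHull ℝ S) :
    ∃ (w : Fin 4 → ℝ) (z : Fin 4 → ℝ × ℝ × ℝ), (∀ i, 0 ≤ w i) ∧ ∑ i, w i = 1 ∧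
      (∀ i, z i ∈ S) ∧ ∑ i, w i • z i = x := by
  obtain ⟨ι, hι, z, w, hz, hind, hw, hw1, hwx⟩ := eq_pos_convex_span_of_mem_convexHull hx
  have hcard : Fintype.card ι ≤ 4 := by
    have h1 := hind.card_le_finrank_succ
    have h2 := Submodule.finrank_le (vectorSpan ℝ (Set.range z))
    have h3 : Module.finrank ℝ (ℝ × ℝ × ℝ) = 3 := by simp
    omega
  have hne : Nonempty ι := by
    by_contra h
    rw [not_nonempty_iff] at h
    simp at hw1
  obtain ⟨i0⟩ := hne
  let e : ι ↪ Fin 4 := (Fintype.equivFin ι).toEmbedding.trans (Fin.castLEEmb hcard)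
  have key : ∀ (M : Type) [AddCommMonoid M] (F : ι → M),
      ∑ j, Function.extend e F 0 j = ∑ i, F i := by
    intro M _ F
    rw [← Finset.sum_subset (Finset.subset_univ (Finset.univ.map e))]
    · rw [Finset.sum_map]
      exact Finset.sum_congr rfl fun i _ => e.injective.extend_apply _ _ _
    · intro j _ hj
      rw [Function.extend_apply']
      · rfl
      · rintro ⟨i, rfl⟩
        simp at hj
  refine ⟨Function.extend e w 0, Function.extend e z (fun _ => z i0), ?_, ?_, ?_, ?_⟩
  · intro j
    by_cases hj : ∃ i, e i = j
    · obtain ⟨i, rfl⟩ := hj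
      rw [e.injective.extend_apply]; exact (hw i).le
    · rw [Function.extend_apply' _ _ _ hj]; rfl
  · rw [key]; exact hw1
  · intro j
    by_cases hj : ∃ i, e i = j
    · obtain ⟨i, rfl⟩ := hj
      rw [e.injective.extend_apply]; exact hz ⟨i, rfl⟩
    · rw [Function.extend_apply' _ _ _ hj]; exact hz ⟨i0, rfl⟩
  · rw [← hwx, ← key]
    refine Finset.sum_congr rfl fun j _ => ?_
    by_cases hj : ∃ i, e i = j
    · obtain ⟨i, rfl⟩ := hj
      simp only [e.injective.extend_apply]
    · simp only [Function.extend_apply' _ _ _ hj]; simp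


/-- Triples of divergences achieved by a single letter. -/
def Sset {X Y : Type*} [MeasurableSpace X] [MeasurableSpace Y] (P : Measure (X × Y)) :
    Set (ℝ × ℝ × ℝ) :=
  {x | ∃ Q : Measure (X × Y), IsProbabilityMeasure Q ∧ Q.map Prod.fst ≪ m1 P ∧
    Q.map Prod.snd ≪ m2 P ∧ KL (Q.map Prod.fst) (m1 P) = (x.1 : EReal) ∧
    KL (Q.map Prod.snd) (m2 P) = (x.2.1 : EReal) ∧ KL Q P = (x.2.2 : EReal) ∧
    0 ≤ x.1 ∧ 0 ≤ x.2.1}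

lemma ereal_coe_sum {ι : Type*} (s : Finset ι) (f : ι → ℝ) :
    ((∑ i ∈ s, f i : ℝ) : EReal) = ∑ i ∈ s, (f i : EReal) := by
  induction s using Finset.induction_on with
  | empty => simp
  | insert a s ha ih => rw [Finset.sum_insert ha, Finset.sum_insert ha, EReal.coe_add, ih]

lemma theta_le {X Y : Type*} [MeasurableSpace X] [MeasurableSpace Y] (P : Measure (X × Y))
    {x : ℝ × ℝ × ℝ} (hx : x ∈ convexHull ℝ (Sset P)) :
    ThetaL P x.1 x.2.1 ≤ (x.2.2 : EReal) := by
  obtain ⟨w, z, hw, hw1, hz, hwx⟩ := carath4 hx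
  have e1 : ∑ i, w i * (z i).1 = x.1 := by rw [← hwx]; simp [Prod.fst_sum]
  have e2 : ∑ i, w i * (z i).2.1 = x.2.1 := by rw [← hwx]; simp [Prod.fst_sum, Prod.snd_sum]
  have e3 : ∑ i, w i * (z i).2.2 = x.2.2 := by rw [← hwx]; simp [Prod.snd_sum]
  have hphi : ∀ i, phiL P (z i).1 (z i).2.1 ≤ ((z i).2.2 : EReal) := by
    intro i
    obtain ⟨Q, hQ, h1, h2, h3, h4, h5, -, -⟩ := hz i
    have hp1 : IsProbabilityMeasure (Q.map Prod.fst) :=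
      Measure.isProbabilityMeasure_map measurable_fst.aemeasurable
    have hp2 : IsProbabilityMeasure (Q.map Prod.snd) :=
      Measure.isProbabilityMeasure_map measurable_snd.aemeasurable
    unfold phiL Dmin
    refine iInf_le_of_le (Q.map Prod.fst) <| iInf_le_of_le (Q.map Prod.snd) <|
      iInf_le_of_le hp1 <| iInf_le_of_le hp2 <| iInf_le_of_le h1 <| iInf_le_of_le h2 <|
      iInf_le_of_le h3 <| iInf_le_of_le h4 <| iInf_le_of_le Q <|
      iInf_le_of_le ⟨hQ, rfl, rfl⟩ h5.le
  unfold ThetaL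
  refine iInf_le_of_le x.1 <| iInf_le_of_le x.2.1 <| iInf_le_of_le le_rfl <|
    iInf_le_of_le le_rfl ?_
  unfold lce2
  refine iInf_le_of_le w <| iInf_le_of_le (fun i => ((z i).1, (z i).2.1)) <|
    iInf_le_of_le hw <| iInf_le_of_le hw1 <| iInf_le_of_le ?_ <| iInf_le_of_le e1 <|
    iInf_le_of_le e2 ?_
  · intro i
    obtain ⟨Q, hQ, h1, h2, h3, h4, h5, h6, h7⟩ := hz i
    exact ⟨h6, h7⟩
  · rw [← e3, ereal_coe_sum]
    refine Finset.sum_le_sum fun i _ => ?_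
    rw [EReal.coe_mul]
    exact mul_le_mul_of_nonneg_left (hphi i) (by exact_mod_cast hw i)

/-- Gibbs variational inequality for one side. -/
def Gibbs {Z X : Type*} [MeasurableSpace Z] [MeasurableSpace X] (μ : Measure Z) (π : Z → X)
    (ν : Measure X) (h : Z → ℝ) (a : ℝ) : Prop :=
  ∀ (ψ : X → ℝ) (δ K : ℝ), Measurable ψ → 0 < δ → (∀ x, δ ≤ ψ x) → (∀ x, ψ x ≤ K) →
    ∫ z, h z * Real.log (ψ (π z)) ∂μ ≤ (∫ z, h z ∂μ) * (a + Real.log (∫ x, ψ x ∂ν))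

/-- Divergence of the normalized density. -/
def Dv {Z : Type*} [MeasurableSpace Z] (μ : Measure Z) (h : Z → ℝ) : ℝ :=
  (∫ z, h z * Real.log (h z) ∂μ) / (∫ z, h z ∂μ) - Real.log (∫ z, h z ∂μ)

universe w
def Good {Z X Y : Type*} [MeasurableSpace Z] [MeasurableSpace X] [MeasurableSpace Y]
    (μ : Measure Z) (πX : Z → X) (νX : Measure X) (πY : Z → Y) (νY : Measure Y)
    (K : Set (ℝ × ℝ × ℝ)) : Prop :=
  ∀ (W : Type w) [MeasurableSpace W] (h : W × Z → ℝ) (M : ℝ), Measurable h → (∀ x, 0 ≤ h x) →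
    (∀ x, h x ≤ M) → ∃ a b : W → ℝ, Measurable a ∧ Measurable b ∧
      ∀ w, 0 < ∫ z, h (w, z) ∂μ →
        (a w, b w, Dv μ (fun z => h (w, z))) ∈ K ∧
        a w ≤ Dv μ (fun z => h (w, z)) ∧ b w ≤ Dv μ (fun z => h (w, z)) ∧
        Gibbs μ πX νX (fun z => h (w, z)) (a w) ∧ Gibbs μ πY νY (fun z => h (w, z)) (b w)

lemma integrable_bdd {Z : Type*} [MeasurableSpace Z] {μ : Measure Z} [IsFiniteMeasure μ]
    {f : Z → ℝ} (hf : Measurable f) (C : ℝ) (h : ∀ z, |f z| ≤ C) : Integrable f μ :=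
  Integrable.of_bound hf.aestronglyMeasurable C (Eventually.of_forall h)

lemma mul_log_bdd (M : ℝ) : ∃ B, 0 ≤ B ∧ ∀ x, 0 ≤ x → x ≤ M → |x * Real.log x| ≤ B := by
  have : BddAbove ((fun x : ℝ => |x * Real.log x|) '' Icc 0 M) :=
    (isCompact_Icc.image (Real.continuous_mul_log.abs)).bddAbove
  obtain ⟨B, hB⟩ := this
  refine ⟨max B 0, le_max_right _ _, fun x h0 h1 => ?_⟩
  exact (hB ⟨x, ⟨h0, h1⟩, rfl⟩).trans (le_max_left _ _)

lemma log_bdd {δ K : ℝ} (hδ : 0 < δ) : ∃ B, 0 ≤ B ∧ ∀ x, δ ≤ x → x ≤ K → |Real.log x| ≤ B := by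
  refine ⟨|Real.log δ| + |Real.log K|, by positivity, fun x h0 h1 => ?_⟩
  have h2 := Real.log_le_log hδ h0
  have h3 := Real.log_le_log (hδ.trans_le h0) h1
  rw [abs_le]
  constructor
  · have := neg_abs_le (Real.log δ)
    have := abs_nonneg (Real.log K)
    linarith
  · have := le_abs_self (Real.log K)
    have := abs_nonneg (Real.log δ)
    linarith

lemma Gibbs.nonneg {Z X : Type*} [MeasurableSpace Z] [MeasurableSpace X] {μ : Measure Z}
    {π : Z → X} {ν : Measure X} [IsProbabilityMeasure ν] {h : Z → ℝ} {a : ℝ}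
    (hG : Gibbs μ π ν h a) (hc : 0 < ∫ z, h z ∂μ) : 0 ≤ a := by
  have := hG (fun _ => 1) 1 1 measurable_const one_pos (fun _ => le_rfl) (fun _ => le_rfl)
  simp at this
  nlinarith

lemma int_le {Z : Type*} [MeasurableSpace Z] {μ : Measure Z} [IsProbabilityMeasure μ]
    {f : Z → ℝ} {C : ℝ} (h0 : ∀ z, 0 ≤ f z) (h : ∀ z, f z ≤ C) : ∫ z, f z ∂μ ≤ C := by
  by_cases hi : Integrable f μ
  · have := integral_mono hi (integrable_const C) h
    simpa using this
  · rw [integral_undef hi]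
    obtain ⟨z⟩ : Nonempty Z := nonempty_of_isProbabilityMeasure μ
    exact (h0 z).trans (h z)

lemma abs_int_le {Z : Type*} [MeasurableSpace Z] {μ : Measure Z} [IsProbabilityMeasure μ]
    {f : Z → ℝ} {C : ℝ} (h : ∀ z, |f z| ≤ C) : |∫ z, f z ∂μ| ≤ C := by
  have := norm_integral_le_of_norm_le_const (μ := μ) (f := f) (C := C) (Eventually.of_forall h)
  simpa using this

section tensor
variable {Z1 Z2 X1 X2 : Type*} [MeasurableSpace Z1] [MeasurableSpace Z2]
  [MeasurableSpace X1] [MeasurableSpace X2]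
  {μ1 : Measure Z1} {μ2 : Measure Z2} [IsProbabilityMeasure μ1] [IsProbabilityMeasure μ2]

/-- One side of the tensorization. -/
lemma gibbs_tensor {π1 : Z1 → X1} {π2 : Z2 → X2} (hπ1 : Measurable π1) (hπ2 : Measurable π2)
    {ν1 : Measure X1} {ν2 : Measure X2}
    [IsProbabilityMeasure ν1] [IsProbabilityMeasure ν2]
    {H : Z1 × Z2 → ℝ} {M : ℝ} (hH : Measurable H) (hH0 : ∀ x, 0 ≤ H x) (hHM : ∀ x, H x ≤ M)
    (hc : 0 < ∫ z, H z ∂(μ1.prod μ2))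
    {a1 : ℝ} {A2 : Z1 → ℝ}
    (hI : Integrable (fun z1 => (∫ z2, H (z1, z2) ∂μ2) * A2 z1) μ1)
    (h1 : Gibbs μ1 π1 ν1 (fun z1 => ∫ z2, H (z1, z2) ∂μ2) a1)
    (h2 : ∀ z1, 0 < ∫ z2, H (z1, z2) ∂μ2 → Gibbs μ2 π2 ν2 (fun z2 => H (z1, z2)) (A2 z1)) :
    Gibbs (μ1.prod μ2) (Prod.map π1 π2) (ν1.prod ν2) H
      (a1 + (∫ z1, (∫ z2, H (z1, z2) ∂μ2) * A2 z1 ∂μ1) / (∫ z, H z ∂(μ1.prod μ2))) := by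
  intro ψ δ K hψ hδ hψδ hψK
  obtain ⟨B, hB0, hB⟩ := log_bdd (K := K) hδ
  have hHi : Integrable H (μ1.prod μ2) := integrable_bdd hH M fun z => by
    rw [abs_of_nonneg (hH0 z)]; exact hHM z
  have hM : 0 ≤ M := by
    obtain ⟨z⟩ : Nonempty (Z1 × Z2) := nonempty_of_isProbabilityMeasure (μ1.prod μ2)
    exact (hH0 z).trans (hHM z)
  have hH1m : Measurable (fun z1 => ∫ z2, H (z1, z2) ∂μ2) :=
    (hH.stronglyMeasurable.integral_prod_right' (ν := μ2)).measurable
  have hψ1m : Measurable (fun x1 => ∫ x2, ψ (x1, x2) ∂ν2) :=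
    (hψ.stronglyMeasurable.integral_prod_right' (ν := ν2)).measurable
  have hψabs : ∀ x, |ψ x| ≤ K := fun x => by
    rw [abs_of_nonneg (hδ.le.trans (hψδ x))]; exact hψK x
  have hψi : Integrable ψ (ν1.prod ν2) := integrable_bdd hψ K hψabs
  have hψ1δ : ∀ x1, δ ≤ ∫ x2, ψ (x1, x2) ∂ν2 := fun x1 => by
    have := integral_mono (μ := ν2) (integrable_const δ)
      (integrable_bdd (hψ.comp measurable_prodMk_left) K fun x2 => hψabs (x1, x2))
      (fun x2 => hψδ (x1, x2))
    simpa using this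
  have hψ1K : ∀ x1, ∫ x2, ψ (x1, x2) ∂ν2 ≤ K := fun x1 =>
    int_le (fun x2 => hδ.le.trans (hψδ _)) (fun x2 => hψK _)
  have hH1M : ∀ z1, ∫ z2, H (z1, z2) ∂μ2 ≤ M := fun z1 =>
    int_le (fun x2 => hH0 _) (fun x2 => hHM _)
  have hH10 : ∀ z1, 0 ≤ ∫ z2, H (z1, z2) ∂μ2 := fun z1 => integral_nonneg fun x2 => hH0 _
  have hLi : Integrable (fun z : Z1 × Z2 => H z * Real.log (ψ (Prod.map π1 π2 z)))
      (μ1.prod μ2) := by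
    apply integrable_bdd (hH.mul (Real.measurable_log.comp (hψ.comp (hπ1.prodMap hπ2)))) (M * B)
    intro z
    rw [Pi.mul_apply, abs_mul, abs_of_nonneg (hH0 z)]
    exact mul_le_mul (hHM z) (hB _ (hψδ _) (hψK _)) (abs_nonneg _) hM
  have hL1i : Integrable (fun z1 => (∫ z2, H (z1, z2) ∂μ2) *
      Real.log (∫ x2, ψ (π1 z1, x2) ∂ν2)) μ1 := by
    apply integrable_bdd (hH1m.mul (Real.measurable_log.comp (hψ1m.comp hπ1))) (M * B)
    intro z
    rw [Pi.mul_apply, abs_mul, abs_of_nonneg (hH10 z)]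
    exact mul_le_mul (hH1M z) (hB _ (hψ1δ _) (hψ1K _)) (abs_nonneg _) hM
  have hcc : ∫ z, H z ∂(μ1.prod μ2) = ∫ z1, (∫ z2, H (z1, z2) ∂μ2) ∂μ1 :=
    integral_prod _ hHi
  have hpt : ∀ z1, ∫ z2, H (z1, z2) * Real.log (ψ (Prod.map π1 π2 (z1, z2))) ∂μ2 ≤
      (∫ z2, H (z1, z2) ∂μ2) * A2 z1 +
        (∫ z2, H (z1, z2) ∂μ2) * Real.log (∫ x2, ψ (π1 z1, x2) ∂ν2) := by
    intro z1
    rcases (hH10 z1).lt_or_eq with h | h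
    · have := h2 z1 h (fun x2 => ψ (π1 z1, x2)) δ K (hψ.comp measurable_prodMk_left) hδ
        (fun _ => hψδ _) (fun _ => hψK _)
      rw [mul_add] at this
      exact this
    · rw [← h, zero_mul, zero_mul, add_zero]
      have h0 : (fun z2 => H (z1, z2)) =ᵐ[μ2] 0 :=
        (integral_eq_zero_iff_of_nonneg (fun _ => hH0 _)
          (integrable_bdd (hH.comp measurable_prodMk_left) M fun z2 => by
            rw [abs_of_nonneg (hH0 _)]; exact hHM _)).1 h.symm
      rw [integral_eq_zero_of_ae]
      filter_upwards [h0] with z2 hz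
      simp only [Pi.zero_apply] at hz
      simp [hz]
  calc ∫ z, H z * Real.log (ψ (Prod.map π1 π2 z)) ∂(μ1.prod μ2)
      = ∫ z1, ∫ z2, H (z1, z2) * Real.log (ψ (Prod.map π1 π2 (z1, z2))) ∂μ2 ∂μ1 :=
        integral_prod _ hLi
    _ ≤ ∫ z1, ((∫ z2, H (z1, z2) ∂μ2) * A2 z1 +
        (∫ z2, H (z1, z2) ∂μ2) * Real.log (∫ x2, ψ (π1 z1, x2) ∂ν2)) ∂μ1 :=
        integral_mono hLi.integral_prod_left (hI.add hL1i) hpt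
    _ = ∫ z1, (∫ z2, H (z1, z2) ∂μ2) * A2 z1 ∂μ1 +
        ∫ z1, (∫ z2, H (z1, z2) ∂μ2) * Real.log (∫ x2, ψ (π1 z1, x2) ∂ν2) ∂μ1 :=
        integral_add hI hL1i
    _ ≤ ∫ z1, (∫ z2, H (z1, z2) ∂μ2) * A2 z1 ∂μ1 +
        (∫ z1, ∫ z2, H (z1, z2) ∂μ2 ∂μ1) *
          (a1 + Real.log (∫ x1, (∫ x2, ψ (x1, x2) ∂ν2) ∂ν1)) := by
        gcongr
        exact h1 (fun x1 => ∫ x2, ψ (x1, x2) ∂ν2) δ K hψ1m hδ hψ1δ hψ1K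
    _ = _ := by
        rw [← hcc, integral_prod ψ hψi]
        field_simp
        ring

lemma h1_mul_dv {H : Z1 × Z2 → ℝ} {M : ℝ} (hH : Measurable H) (hH0 : ∀ x, 0 ≤ H x)
    (hHM : ∀ x, H x ≤ M) (z1 : Z1) :
    (∫ z2, H (z1, z2) ∂μ2) * Dv μ2 (fun z2 => H (z1, z2)) =
      ∫ z2, H (z1, z2) * Real.log (H (z1, z2)) ∂μ2 -
        (∫ z2, H (z1, z2) ∂μ2) * Real.log (∫ z2, H (z1, z2) ∂μ2) := by
  unfold Dv
  by_cases h : ∫ z2, H (z1, z2) ∂μ2 = 0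
  · have h0 : (fun z2 => H (z1, z2)) =ᵐ[μ2] 0 :=
      (integral_eq_zero_iff_of_nonneg (fun _ => hH0 _)
        (integrable_bdd (hH.comp measurable_prodMk_left) M fun z2 => by
          rw [abs_of_nonneg (hH0 _)]; exact hHM _)).1 h
    have : ∫ z2, H (z1, z2) * Real.log (H (z1, z2)) ∂μ2 = 0 := by
      rw [integral_eq_zero_of_ae]
      filter_upwards [h0] with z2 hz
      simp only [Pi.zero_apply] at hz
      simp [hz]
    rw [h, this]; simp
  · field_simp

lemma good_tensor {Z1 : Type w} {Z2 X1 X2 Y1 Y2 : Type*}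
    [MeasurableSpace Z1] [MeasurableSpace Z2]
    [MeasurableSpace X1] [MeasurableSpace X2] [MeasurableSpace Y1] [MeasurableSpace Y2]
    {μ1 : Measure Z1} {μ2 : Measure Z2} [IsProbabilityMeasure μ1] [IsProbabilityMeasure μ2]
    {πX1 : Z1 → X1} {πX2 : Z2 → X2} (hπX1 : Measurable πX1) (hπX2 : Measurable πX2)
    {πY1 : Z1 → Y1} {πY2 : Z2 → Y2} (hπY1 : Measurable πY1) (hπY2 : Measurable πY2)
    {νX1 : Measure X1} {νX2 : Measure X2}
    [IsProbabilityMeasure νX1] [IsProbabilityMeasure νX2]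
    {νY1 : Measure Y1} {νY2 : Measure Y2}
    [IsProbabilityMeasure νY1] [IsProbabilityMeasure νY2]
    {K1 K2 K : Set (ℝ × ℝ × ℝ)} (hK2 : Convex ℝ K2)
    (hK : ∀ x ∈ K1, ∀ y ∈ K2, x + y ∈ K)
    (hG1 : Good.{w} μ1 πX1 νX1 πY1 νY1 K1) (hG2 : Good.{w} μ2 πX2 νX2 πY2 νY2 K2) :
    Good.{w} (μ1.prod μ2) (Prod.map πX1 πX2) (νX1.prod νX2) (Prod.map πY1 πY2)
      (νY1.prod νY2) K := by
  intro W _ h M hh hh0 hhM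
  obtain ⟨a2, b2, ha2, hb2, h2⟩ := hG2 (W × Z1) (fun x => h (x.1.1, (x.1.2, x.2))) M
    (by fun_prop) (fun _ => hh0 _) (fun _ => hhM _)
  have hh1m : Measurable (fun x : W × Z1 => ∫ z2, h (x.1, (x.2, z2)) ∂μ2) :=
    (Measurable.stronglyMeasurable (f := fun y : (W × Z1) × Z2 => h (y.1.1, (y.1.2, y.2)))
      (by fun_prop)).integral_prod_right'.measurable
  have hh10 : ∀ x : W × Z1, 0 ≤ ∫ z2, h (x.1, (x.2, z2)) ∂μ2 := fun x =>
    integral_nonneg fun _ => hh0 _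
  have hh1M : ∀ x : W × Z1, ∫ z2, h (x.1, (x.2, z2)) ∂μ2 ≤ M := fun x =>
    int_le (fun _ => hh0 _) (fun _ => hhM _)
  obtain ⟨a1, b1, ha1, hb1, h1⟩ := hG1 W (fun x => ∫ z2, h (x.1, (x.2, z2)) ∂μ2) M
    hh1m hh10 hh1M
  have hcm : Measurable (fun w => ∫ z, h (w, z) ∂(μ1.prod μ2)) :=
    hh.stronglyMeasurable.integral_prod_right'.measurable
  refine ⟨fun w => a1 w + (∫ z1, (∫ z2, h (w, (z1, z2)) ∂μ2) * a2 (w, z1) ∂μ1) /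
      (∫ z, h (w, z) ∂(μ1.prod μ2)),
    fun w => b1 w + (∫ z1, (∫ z2, h (w, (z1, z2)) ∂μ2) * b2 (w, z1) ∂μ1) /
      (∫ z, h (w, z) ∂(μ1.prod μ2)), ?_, ?_, ?_⟩
  · exact ha1.add (((hh1m.mul ha2).stronglyMeasurable.integral_prod_right'.measurable).div hcm)
  · exact hb1.add (((hh1m.mul hb2).stronglyMeasurable.integral_prod_right'.measurable).div hcm)
  intro w hc
  set H : Z1 × Z2 → ℝ := fun z => h (w, z) with hHdef
  have hH : Measurable H := hh.comp measurable_prodMk_left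
  have hH0 : ∀ x, 0 ≤ H x := fun _ => hh0 _
  have hHM : ∀ x, H x ≤ M := fun _ => hhM _
  set H1 : Z1 → ℝ := fun z1 => ∫ z2, H (z1, z2) ∂μ2 with hH1def
  have hH1m : Measurable H1 := hh1m.comp measurable_prodMk_left
  have hH10 : ∀ z, 0 ≤ H1 z := fun z => hh10 (w, z)
  have hH1M : ∀ z, H1 z ≤ M := fun z => hh1M (w, z)
  have hHi : Integrable H (μ1.prod μ2) := integrable_bdd hH M fun z => by
    rw [abs_of_nonneg (hH0 z)]; exact hHM z
  have hH1i : Integrable H1 μ1 := integrable_bdd hH1m M fun z => by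
    rw [abs_of_nonneg (hH10 z)]; exact hH1M z
  have hcc : ∫ z, H z ∂(μ1.prod μ2) = ∫ z1, H1 z1 ∂μ1 := integral_prod _ hHi
  have hc1 : 0 < ∫ z1, H1 z1 ∂μ1 := hcc ▸ hc
  obtain ⟨h11, h12, h13, h14, h15⟩ := h1 w hc1
  have h2' := fun z1 => h2 (w, z1)
  set D2 : Z1 → ℝ := fun z1 => Dv μ2 (fun z2 => H (z1, z2)) with hD2
  obtain ⟨B, hB0, hB⟩ := mul_log_bdd M
  have hHlog : Measurable (fun z => H z * Real.log (H z)) :=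
    hH.mul (Real.measurable_log.comp hH)
  have hHD : ∀ z1, H1 z1 * D2 z1 = ∫ z2, H (z1, z2) * Real.log (H (z1, z2)) ∂μ2 -
      H1 z1 * Real.log (H1 z1) := fun z1 => h1_mul_dv hH hH0 hHM z1
  have hD2m : Measurable D2 := by
    unfold D2 Dv
    exact (hHlog.stronglyMeasurable.integral_prod_right'.measurable.div hH1m).sub
      (Real.measurable_log.comp hH1m)
  have hHDb : ∀ z1, |H1 z1 * D2 z1| ≤ B + B := fun z1 => by
    rw [hHD]
    refine (abs_sub _ _).trans (add_le_add ?_ (hB _ (hH10 _) (hH1M _)))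
    exact abs_int_le fun z2 => hB _ (hH0 _) (hHM _)
  have hDi : Integrable (fun z1 => H1 z1 * D2 z1) μ1 :=
    integrable_bdd (hH1m.mul hD2m) (B + B) hHDb
  have hside : ∀ e2 : W × Z1 → ℝ, Measurable e2 →
      (∀ z1, 0 < H1 z1 → 0 ≤ e2 (w, z1) ∧ e2 (w, z1) ≤ D2 z1) →
      Integrable (fun z1 => H1 z1 * e2 (w, z1)) μ1 ∧
        ∫ z1, H1 z1 * e2 (w, z1) ∂μ1 ≤ ∫ z1, H1 z1 * D2 z1 ∂μ1 := by
    intro e2 he2 hb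
    have hle : ∀ z1, 0 ≤ H1 z1 * e2 (w, z1) ∧ H1 z1 * e2 (w, z1) ≤ H1 z1 * D2 z1 := by
      intro z1
      rcases (hH10 z1).lt_or_eq with h | h
      · obtain ⟨u, v⟩ := hb z1 h
        exact ⟨mul_nonneg h.le u, mul_le_mul_of_nonneg_left v h.le⟩
      · rw [← h]; simp
    have hi : Integrable (fun z1 => H1 z1 * e2 (w, z1)) μ1 := by
      refine integrable_bdd (hH1m.mul (he2.comp measurable_prodMk_left)) (B + B) fun z1 => ?_
      change |H1 z1 * e2 (w, z1)| ≤ _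
      rw [abs_of_nonneg (hle z1).1]
      exact (hle z1).2.trans ((le_abs_self _).trans (hHDb z1))
    exact ⟨hi, integral_mono hi hDi fun z1 => (hle z1).2⟩
  obtain ⟨hAi, hAle⟩ := hside a2 ha2 fun z1 hz => by
    obtain ⟨u1, u2, u3, u4, u5⟩ := h2' z1 hz
    exact ⟨u4.nonneg hz, u2⟩
  obtain ⟨hBi, hBle⟩ := hside b2 hb2 fun z1 hz => by
    obtain ⟨u1, u2, u3, u4, u5⟩ := h2' z1 hz
    exact ⟨u5.nonneg hz, u3⟩
  have hDD : Dv (μ1.prod μ2) H = Dv μ1 H1 + (∫ z1, H1 z1 * D2 z1 ∂μ1) /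
      (∫ z, H z ∂(μ1.prod μ2)) := by
    have e1 : ∫ z1, H1 z1 * D2 z1 ∂μ1 = ∫ z, H z * Real.log (H z) ∂(μ1.prod μ2) -
        ∫ z1, H1 z1 * Real.log (H1 z1) ∂μ1 := by
      have i1 : Integrable (fun z => H z * Real.log (H z)) (μ1.prod μ2) :=
        integrable_bdd hHlog B fun z => hB _ (hH0 z) (hHM z)
      rw [integral_prod _ i1, ← integral_sub i1.integral_prod_left]
      · exact integral_congr_ae (Eventually.of_forall hHD)
      · exact integrable_bdd (hH1m.mul (Real.measurable_log.comp hH1m)) B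
          fun z => hB _ (hH10 z) (hH1M z)
    unfold Dv
    rw [e1, hcc]
    field_simp
    ring
  refine ⟨?_, ?_, ?_, ?_, ?_⟩
  · -- convexity
    have hdens : ∫⁻ z1, ENNReal.ofReal (H1 z1 / ∫ z, H1 z ∂μ1) ∂μ1 = 1 := by
      rw [← ofReal_integral_eq_lintegral_ofReal (hH1i.div_const _)
        (Eventually.of_forall fun z => div_nonneg (hH10 z) hc1.le), integral_div,
        div_self hc1.ne', ENNReal.ofReal_one]
    set Q := μ1.withDensity (fun z1 => ENNReal.ofReal (H1 z1 / ∫ z, H1 z ∂μ1)) with hQ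
    have hQp : IsProbabilityMeasure Q := ⟨by rw [hQ, withDensity_apply _ MeasurableSet.univ,
      Measure.restrict_univ, hdens]⟩
    have hdm : Measurable (fun z1 => ENNReal.ofReal (H1 z1 / ∫ z, H1 z ∂μ1)) := by fun_prop
    have hinteg : ∀ e : Z1 → ℝ, Integrable (fun z1 => H1 z1 * e z1) μ1 →
        Integrable e Q ∧ ∫ z, e z ∂Q = (∫ z1, H1 z1 * e z1 ∂μ1) / (∫ z, H1 z ∂μ1) := by
      intro e he
      have heq : ∀ z1, (ENNReal.ofReal (H1 z1 / ∫ z, H1 z ∂μ1)).toReal • e z1 =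
          (H1 z1 * e z1) / (∫ z, H1 z ∂μ1) := fun z1 => by
        rw [ENNReal.toReal_ofReal (div_nonneg (hH10 z1) hc1.le), smul_eq_mul]; ring
      constructor
      · rw [hQ, integrable_withDensity_iff_integrable_smul' hdm
          (Eventually.of_forall fun _ => ENNReal.ofReal_lt_top)]
        simp_rw [heq]
        exact he.div_const _
      · rw [hQ, integral_withDensity_eq_integral_toReal_smul hdm
          (Eventually.of_forall fun _ => ENNReal.ofReal_lt_top)]
        simp_rw [heq]
        rw [integral_div]
    obtain ⟨iA, eA⟩ := hinteg _ hAi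
    obtain ⟨iB, eB⟩ := hinteg _ hBi
    obtain ⟨iD, eD⟩ := hinteg _ hDi
    have hpos : ∀ᵐ z ∂Q, (a2 (w, z), b2 (w, z), D2 z) ∈ K2 := by
      rw [hQ, ae_withDensity_iff hdm]
      refine Eventually.of_forall fun z hz => ?_
      have : 0 < H1 z := by
        rcases (hH10 z).lt_or_eq with h | h
        · exact h
        · exfalso; apply hz; rw [← h]; simp
      exact (h2' z this).1
    have hmem := jensen_mem Q hK2 (iA.prodMk (iB.prodMk iD)) hpos
    rw [integral_pair iA (iB.prodMk iD), integral_pair iB iD, eA, eB, eD] at hmem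
    have := hK _ h11 _ hmem
    rw [← hcc] at this
    rw [hDD]
    exact this
  · rw [hDD]
    have := div_le_div_of_nonneg_right hAle hc.le
    exact add_le_add h12 this
  · rw [hDD]
    have := div_le_div_of_nonneg_right hBle hc.le
    exact add_le_add h13 this
  · exact gibbs_tensor hπX1 hπX2 hH hH0 hHM hc hAi h14 fun z1 hz => (h2' z1 hz).2.2.2.1
  · exact gibbs_tensor hπY1 hπY2 hH hH0 hHM hc hBi h15 fun z1 hz => (h2' z1 hz).2.2.2.2
end tensor

lemma kl_withDensity {Z : Type*} [MeasurableSpace Z] (μ : Measure Z) [IsProbabilityMeasure μ]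
    {h : Z → ℝ} {M : ℝ} (hh : Measurable h) (h0 : ∀ z, 0 ≤ h z) (hM : ∀ z, h z ≤ M)
    (hc : 0 < ∫ z, h z ∂μ) :
    KL (μ.withDensity fun z => ENNReal.ofReal (h z / ∫ z, h z ∂μ)) μ = (Dv μ h : EReal) := by
  set c := ∫ z, h z ∂μ with hcdef
  have hm : Measurable fun z => ENNReal.ofReal (h z / c) := (hh.div_const c).ennreal_ofReal
  set Q := μ.withDensity fun z => ENNReal.ofReal (h z / c) with hQ
  have hac : Q ≪ μ := withDensity_absolutelyContinuous _ _
  have hr : (fun x => Real.log (Q.rnDeriv μ x).toReal) =ᵐ[Q] fun x => Real.log (h x / c) := by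
    have := Measure.rnDeriv_withDensity μ hm
    filter_upwards [hac.ae_le this] with x hx
    rw [hx, ENNReal.toReal_ofReal (div_nonneg (h0 x) hc.le)]
  have hlt : ∀ᵐ x ∂μ, ENNReal.ofReal (h x / c) < ⊤ := Eventually.of_forall fun x => ENNReal.ofReal_lt_top
  have hpt : ∀ x, (ENNReal.ofReal (h x / c)).toReal • Real.log (h x / c) =
      c⁻¹ * (h x * Real.log (h x)) - (c⁻¹ * Real.log c) * h x := by
    intro x
    rw [ENNReal.toReal_ofReal (div_nonneg (h0 x) hc.le), smul_eq_mul]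
    rcases (h0 x).lt_or_eq with hx | hx
    · rw [Real.log_div hx.ne' hc.ne']; ring
    · rw [← hx]; simp
  obtain ⟨B, hB0, hB⟩ := mul_log_bdd M
  have i1 : Integrable (fun x => h x * Real.log (h x)) μ :=
    integrable_bdd (hh.mul (Real.measurable_log.comp hh)) B fun z => hB _ (h0 z) (hM z)
  have i2 : Integrable h μ := integrable_bdd hh M fun z => by
    rw [abs_of_nonneg (h0 z)]; exact hM z
  have hinteg : Integrable (fun x => Real.log (Q.rnDeriv μ x).toReal) Q := by
    rw [integrable_congr hr, hQ, integrable_withDensity_iff_integrable_smul' hm hlt]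
    simp_rw [hpt]
    exact (i1.const_mul _).sub (i2.const_mul _)
  rw [KL, if_pos ⟨hac, hinteg⟩, integral_congr_ae hr, hQ,
    integral_withDensity_eq_integral_toReal_smul hm hlt]
  simp_rw [hpt]
  rw [integral_sub (i1.const_mul _) (i2.const_mul _), integral_const_mul, integral_const_mul]
  congr 1
  rw [Dv, ← hcdef]
  field_simp

lemma prob_withDensity {Z : Type*} [MeasurableSpace Z] (μ : Measure Z) [IsProbabilityMeasure μ]
    {h : Z → ℝ} {M : ℝ} (hh : Measurable h) (h0 : ∀ z, 0 ≤ h z) (hM : ∀ z, h z ≤ M)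
    (hc : 0 < ∫ z, h z ∂μ) :
    IsProbabilityMeasure (μ.withDensity fun z => ENNReal.ofReal (h z / ∫ z, h z ∂μ)) := by
  constructor
  have i2 : Integrable h μ := integrable_bdd hh M fun z => by
    rw [abs_of_nonneg (h0 z)]; exact hM z
  rw [withDensity_apply _ MeasurableSet.univ, Measure.restrict_univ,
    ← ofReal_integral_eq_lintegral_ofReal (i2.div_const _)
      (Eventually.of_forall fun z => div_nonneg (h0 z) hc.le), integral_div, div_self hc.ne']
  simp

lemma side {Z X : Type*} {W : Type*} [MeasurableSpace Z] [StandardBorelSpace Z]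
    [MeasurableSpace X] [MeasurableSpace W] (μ : Measure Z) [IsProbabilityMeasure μ]
    {π : Z → X} (hπ : Measurable π) {h : W × Z → ℝ} {M : ℝ} (hh : Measurable h)
    (h0 : ∀ z, 0 ≤ h z) (hM : ∀ z, h z ≤ M) :
    ∃ r : W × X → ℝ, Measurable r ∧ (∀ x, 0 ≤ r x) ∧ (∀ x, r x ≤ M) ∧
      (∀ w, ∀ (φ : X → ℝ) (B : ℝ), Measurable φ → (∀ x, |φ x| ≤ B) →
        ∫ z, h (w, z) * φ (π z) ∂μ = ∫ x, r (w, x) * φ x ∂(μ.map π)) ∧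
      (∀ w, ∫ x, r (w, x) * Real.log (r (w, x)) ∂(μ.map π) ≤
        ∫ z, h (w, z) * Real.log (h (w, z)) ∂μ) := by
  have hne : Nonempty Z := nonempty_of_isProbabilityMeasure μ
  have hν : IsProbabilityMeasure (μ.map π) := Measure.isProbabilityMeasure_map hπ.aemeasurable
  set κ := condDistrib (id : Z → Z) π μ with hκ
  have hdis : ∀ (F : X × Z → ℝ) (B : ℝ), Measurable F → (∀ x, |F x| ≤ B) →
      ∫ z, F (π z, z) ∂μ = ∫ x, ∫ z, F (x, z) ∂(κ x) ∂(μ.map π) := by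
    intro F B hF hB
    rw [← Measure.integral_compProd (integrable_bdd hF B hB), hκ,
      compProd_map_condDistrib aemeasurable_id,
      integral_map (hπ.prodMk measurable_id).aemeasurable hF.aestronglyMeasurable]
    rfl
  have hhw : ∀ w, Measurable fun z => h (w, z) := fun w => hh.comp measurable_prodMk_left
  have habs : ∀ x, |h x| ≤ M := fun x => by rw [abs_of_nonneg (h0 x)]; exact hM x
  obtain ⟨B, hB0, hB⟩ := mul_log_bdd M
  refine ⟨fun y => ∫ z, h (y.1, z) ∂(κ y.2), ?_, fun _ => integral_nonneg fun _ => h0 _,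
    fun _ => int_le (fun _ => h0 _) (fun _ => hM _), ?_, ?_⟩
  · have := StronglyMeasurable.integral_kernel_prod_right' (κ := κ.comap (Prod.snd : W × X → X) measurable_snd)
      (f := fun y : (W × X) × Z => h (y.1.1, y.2)) (by
        apply Measurable.stronglyMeasurable
        exact hh.comp (measurable_fst.fst.prodMk measurable_snd))
    simpa [Kernel.comap_apply] using this.measurable
  · intro w φ C hφ hC
    have hM0 : 0 ≤ M := (h0 (w, hne.some)).trans (hM _)
    rw [hdis (fun y => h (w, y.2) * φ y.1) (M * C) (((hhw w).comp measurable_snd).mul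
      (hφ.comp measurable_fst)) (fun y => by
        rw [abs_mul]; exact mul_le_mul (habs _) (hC _) (abs_nonneg _) hM0)]
    simp only [integral_mul_const]
  · intro w
    rw [hdis (fun y => h (w, y.2) * Real.log (h (w, y.2))) B (((hhw w).mul
      (Real.measurable_log.comp (hhw w))).comp measurable_snd) fun y => hB _ (h0 _) (hM _)]
    have hm1 : Measurable fun x => ∫ z, h (w, z) ∂(κ x) :=
      ((hhw w).stronglyMeasurable.integral_kernel (κ := κ)).measurable
    have hm2 : Measurable fun z => h (w, z) * Real.log (h (w, z)) :=
      (hhw w).mul (Real.measurable_log.comp (hhw w))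
    have hm3 : Measurable fun x => ∫ z, h (w, z) * Real.log (h (w, z)) ∂(κ x) :=
      (hm2.stronglyMeasurable.integral_kernel (κ := κ)).measurable
    refine integral_mono (integrable_bdd (hm1.mul (Real.measurable_log.comp hm1)) B fun x => ?_)
      (integrable_bdd hm3 B fun x => ?_) fun x => ?_
    · exact hB _ (integral_nonneg fun _ => h0 _) (int_le (fun _ => h0 _) (fun _ => hM _))
    · exact abs_int_le fun z => hB _ (h0 _) (hM _)
    · exact Real.convexOn_mul_log.map_integral_le (Real.continuous_mul_log.continuousOn) isClosed_Ici
        (Eventually.of_forall fun z => h0 _) (integrable_bdd (hhw w) M fun z => habs _)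
        (integrable_bdd hm2 B fun z => hB _ (h0 _) (hM _))

lemma gibbs_one {X : Type*} [MeasurableSpace X] (ν : Measure X) [IsProbabilityMeasure ν]
    {r : X → ℝ} {M : ℝ} (hr : Measurable r) (h0 : ∀ x, 0 ≤ r x) (hM : ∀ x, r x ≤ M)
    (hc : 0 < ∫ x, r x ∂ν) (ψ : X → ℝ) (δ K : ℝ) (hψ : Measurable ψ) (hδ : 0 < δ)
    (hψδ : ∀ x, δ ≤ ψ x) (hψK : ∀ x, ψ x ≤ K) :
    ∫ x, r x * Real.log (ψ x) ∂ν ≤ (∫ x, r x ∂ν) * (Dv ν r + Real.log (∫ x, ψ x ∂ν)) := by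
  obtain ⟨L, hL0, hL⟩ := log_bdd (K := K) hδ
  obtain ⟨B, hB0, hB⟩ := mul_log_bdd M
  have hψabs : ∀ x, |ψ x| ≤ K := fun x => by
    rw [abs_of_nonneg (hδ.le.trans (hψδ x))]; exact hψK x
  have hψi : Integrable ψ ν := integrable_bdd hψ K hψabs
  have hri : Integrable r ν := integrable_bdd hr M fun x => by
    rw [abs_of_nonneg (h0 x)]; exact hM x
  have hrl : Integrable (fun x => r x * Real.log (r x)) ν :=
    integrable_bdd (hr.mul (Real.measurable_log.comp hr)) B fun z => hB _ (h0 z) (hM z)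
  have hM0 : 0 ≤ M := by
    obtain ⟨z⟩ : Nonempty X := nonempty_of_isProbabilityMeasure ν
    exact (h0 z).trans (hM z)
  have hrψ : Integrable (fun x => r x * Real.log (ψ x)) ν :=
    integrable_bdd (hr.mul (Real.measurable_log.comp hψ)) (M * L) fun z => by
      rw [abs_mul, abs_of_nonneg (h0 z)]
      exact mul_le_mul (hM z) (hL _ (hψδ _) (hψK _)) (abs_nonneg _) hM0
  have hS : 0 < ∫ x, ψ x ∂ν := by
    have := integral_mono (μ := ν) (integrable_const δ) hψi hψδ
    simp at this
    linarith
  set S := ∫ x, ψ x ∂ν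
  set c := ∫ x, r x ∂ν with hcd
  have key : ∀ x, r x * Real.log (ψ x) ≤
      r x * Real.log (r x) + (Real.log S - Real.log c - 1) * r x + (c / S) * ψ x := by
    intro x
    have hψx := hδ.trans_le (hψδ x)
    rcases (h0 x).lt_or_eq with hx | hx
    · have := Real.log_le_sub_one_of_pos (x := ψ x * c / (r x * S)) (by positivity)
      rw [Real.log_div (by positivity) (by positivity), Real.log_mul hψx.ne' hc.ne',
        Real.log_mul hx.ne' hS.ne'] at this
      have h2 := mul_le_mul_of_nonneg_left this hx.le
      have h3 : r x * (ψ x * c / (r x * S) - 1) = (c / S) * ψ x - r x := by field_simp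
      rw [h3] at h2
      nlinarith
    · rw [← hx]; simp; positivity
  have hI2 : Integrable (fun x => r x * Real.log (r x) + (Real.log S - Real.log c - 1) * r x) ν :=
    hrl.add (hri.const_mul _)
  have h1 : ∫ x, r x * Real.log (ψ x) ∂ν ≤ ∫ x, (r x * Real.log (r x) +
      (Real.log S - Real.log c - 1) * r x + (c / S) * ψ x) ∂ν :=
    integral_mono hrψ (hI2.add (hψi.const_mul _)) key
  refine h1.trans (le_of_eq ?_)
  rw [integral_add hI2 (hψi.const_mul _), integral_add hrl (hri.const_mul _),
    integral_const_mul, integral_const_mul, Dv, ← hcd]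
  field_simp
  ring

/-- single side -/
lemma side2 {Z X : Type*} {W : Type*} [MeasurableSpace Z] [StandardBorelSpace Z]
    [MeasurableSpace X] [MeasurableSpace W] (μ : Measure Z) [IsProbabilityMeasure μ]
    {π : Z → X} (hπ : Measurable π) {h : W × Z → ℝ} {M : ℝ} (hh : Measurable h)
    (h0 : ∀ z, 0 ≤ h z) (hM : ∀ z, h z ≤ M) :
    ∃ a : W → ℝ, Measurable a ∧ ∀ w, 0 < ∫ z, h (w, z) ∂μ →
      a w ≤ Dv μ (fun z => h (w, z)) ∧ Gibbs μ π (μ.map π) (fun z => h (w, z)) (a w) ∧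
      (μ.withDensity fun z => ENNReal.ofReal (h (w, z) / ∫ z, h (w, z) ∂μ)).map π ≪ μ.map π ∧
      KL ((μ.withDensity fun z => ENNReal.ofReal (h (w, z) / ∫ z, h (w, z) ∂μ)).map π) (μ.map π)
        = (a w : EReal) := by
  have hν : IsProbabilityMeasure (μ.map π) := Measure.isProbabilityMeasure_map hπ.aemeasurable
  obtain ⟨r, hr, hr0, hrM, hrφ, hrJ⟩ := side μ hπ hh h0 hM
  have hm1 : Measurable fun w => ∫ x, r (w, x) ∂(μ.map π) :=
    (hr.stronglyMeasurable.integral_prod_right' (ν := μ.map π)).measurable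
  have hm2 : Measurable fun w => ∫ x, r (w, x) * Real.log (r (w, x)) ∂(μ.map π) :=
    ((hr.mul (Real.measurable_log.comp hr)).stronglyMeasurable.integral_prod_right'
      (ν := μ.map π)).measurable
  refine ⟨fun w => Dv (μ.map π) (fun x => r (w, x)), ?_, ?_⟩
  · exact (hm2.div hm1).sub (Real.measurable_log.comp hm1)
  intro w hc
  have hrw : Measurable fun x => r (w, x) := hr.comp measurable_prodMk_left
  have hhw : Measurable fun x => h (w, x) := hh.comp measurable_prodMk_left
  have hcc : ∫ z, h (w, z) ∂μ = ∫ x, r (w, x) ∂(μ.map π) := by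
    simpa using hrφ w (fun _ => 1) 1 measurable_const (by simp)
  have hc' := hc
  rw [hcc] at hc'
  have hri : Integrable (fun x => r (w, x)) (μ.map π) := integrable_bdd hrw M fun x => by
    rw [abs_of_nonneg (hr0 _)]; exact hrM _
  have hhi : Integrable (fun x => h (w, x)) μ := integrable_bdd hhw M fun x => by
    rw [abs_of_nonneg (h0 _)]; exact hM _
  have hmap : (μ.withDensity fun z => ENNReal.ofReal (h (w, z) / ∫ z, h (w, z) ∂μ)).map π =
      (μ.map π).withDensity fun x => ENNReal.ofReal (r (w, x) / ∫ x, r (w, x) ∂(μ.map π)) := by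
    rw [← hcc]
    set c := ∫ z, h (w, z) ∂μ
    ext A hA
    rw [Measure.map_apply hπ hA, withDensity_apply _ (hπ hA), withDensity_apply _ hA,
      ← ofReal_integral_eq_lintegral_ofReal (hhi.div_const _).integrableOn
        (Eventually.of_forall fun z => div_nonneg (h0 _) hc.le),
      ← ofReal_integral_eq_lintegral_ofReal (hri.div_const _).integrableOn
        (Eventually.of_forall fun z => div_nonneg (hr0 _) hc.le), integral_div, integral_div,
      ← integral_indicator (hπ hA), ← integral_indicator hA]
    have := hrφ w (A.indicator fun _ => 1) 1 (measurable_const.indicator hA) (fun x => by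
      by_cases hx : x ∈ A <;> simp [hx])
    have e1 : (fun z => h (w, z) * A.indicator (fun _ => (1 : ℝ)) (π z)) =
        fun z => (π ⁻¹' A).indicator (fun a => h (w, a)) z := by
      ext z; by_cases hx : π z ∈ A <;> simp [hx]
    have e2 : (fun z => r (w, z) * A.indicator (fun _ => (1 : ℝ)) z) =
        fun z => A.indicator (fun a => r (w, a)) z := by
      ext z; by_cases hx : z ∈ A <;> simp [hx]
    rw [e1, e2] at this
    rw [this]
  refine ⟨?_, ?_, ?_, ?_⟩
  · simp only [Dv]
    rw [← hcc]
    have := div_le_div_of_nonneg_right (hrJ w) hc.le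
    linarith
  · intro ψ δ K hψ hδ hψδ hψK
    obtain ⟨L, hL0, hL⟩ := log_bdd (K := K) hδ
    have := gibbs_one (μ.map π) hrw (fun _ => hr0 _) (fun _ => hrM _) hc' ψ δ K hψ hδ hψδ hψK
    rw [← hrφ w (fun x => Real.log (ψ x)) L (Real.measurable_log.comp hψ)
      (fun x => hL _ (hψδ _) (hψK _)), ← hcc] at this
    exact this
  · rw [hmap]; exact withDensity_absolutelyContinuous _ _
  · rw [hmap]
    exact kl_withDensity (μ.map π) hrw (fun _ => hr0 _) (fun _ => hrM _) hc'

lemma good_one {X Y : Type*} [MeasurableSpace X] [MeasurableSpace Y] [StandardBorelSpace X]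
    [StandardBorelSpace Y] (P : Measure (X × Y)) [IsProbabilityMeasure P] :
    Good.{w} P Prod.fst (m1 P) Prod.snd (m2 P) (convexHull ℝ (Sset P)) := by
  intro W _ h M hh h0 hM
  obtain ⟨a, ha, hA⟩ := side2 P measurable_fst hh h0 hM
  obtain ⟨b, hb, hB⟩ := side2 P measurable_snd hh h0 hM
  have p1 : IsProbabilityMeasure (m1 P) := Measure.isProbabilityMeasure_map measurable_fst.aemeasurable
  have p2 : IsProbabilityMeasure (m2 P) := Measure.isProbabilityMeasure_map measurable_snd.aemeasurable
  refine ⟨a, b, ha, hb, fun w hc => ?_⟩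
  obtain ⟨a1, a2, a3, a4⟩ := hA w hc
  obtain ⟨b1, b2, b3, b4⟩ := hB w hc
  have hhw : Measurable fun x => h (w, x) := hh.comp measurable_prodMk_left
  refine ⟨subset_convexHull _ _ ⟨_, prob_withDensity P hhw (fun _ => h0 _) (fun _ => hM _) hc,
    a3, b3, a4, b4, kl_withDensity P hhw (fun _ => h0 _) (fun _ => hM _) hc, ?_, ?_⟩,
    a1, b1, a2, b2⟩
  · exact Gibbs.nonneg (ν := m1 P) a2 hc
  · exact Gibbs.nonneg (ν := m2 P) b2 hc

lemma sset_nonempty {X Y : Type*} [MeasurableSpace X] [MeasurableSpace Y] [StandardBorelSpace X]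
    [StandardBorelSpace Y] (P : Measure (X × Y)) [IsProbabilityMeasure P] :
    (convexHull ℝ (Sset P)).Nonempty := by
  obtain ⟨a, b, -, -, h⟩ := good_one P PUnit.{1} (fun _ => 1) 1 measurable_const (by simp) (by simp)
  exact ⟨_, (h ⟨⟩ (by simp)).1⟩

/-- Transfer of `Good` along measure preserving equivalences. -/
lemma Good.transfer {Z X Y Z' X' Y' : Type*} [MeasurableSpace Z] [MeasurableSpace X]
    [MeasurableSpace Y] [MeasurableSpace Z'] [MeasurableSpace X'] [MeasurableSpace Y']
    {μ : Measure Z} {πX : Z → X} {νX : Measure X} {πY : Z → Y} {νY : Measure Y}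
    {μ' : Measure Z'} {πX' : Z' → X'} {νX' : Measure X'} {πY' : Z' → Y'} {νY' : Measure Y'}
    {K : Set (ℝ × ℝ × ℝ)}
    (hG : Good.{w} μ πX νX πY νY K) (e : Z ≃ᵐ Z') (eX : X ≃ᵐ X') (eY : Y ≃ᵐ Y')
    (he : MeasurePreserving e μ μ') (heX : MeasurePreserving eX νX νX')
    (heY : MeasurePreserving eY νY νY') (hX : ∀ z, πX' (e z) = eX (πX z))
    (hY : ∀ z, πY' (e z) = eY (πY z)) : Good.{w} μ' πX' νX' πY' νY' K := by
  intro W _ h M hh h0 hM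
  obtain ⟨a, b, ha, hb, H⟩ := hG W (fun y => h (y.1, e y.2)) M
    (hh.comp (measurable_fst.prodMk (e.measurable.comp measurable_snd))) (fun _ => h0 _)
    (fun _ => hM _)
  have hinteg : ∀ F : Z' → ℝ, ∫ z, F (e z) ∂μ = ∫ z, F z ∂μ' := fun F =>
    he.integral_comp e.measurableEmbedding F
  have hDv : ∀ w, Dv μ (fun z => h (w, e z)) = Dv μ' (fun z => h (w, z)) := fun w => by
    unfold Dv
    rw [hinteg (fun z => h (w, z)), hinteg (fun z => h (w, z) * Real.log (h (w, z)))]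
  refine ⟨a, b, ha, hb, fun w hc => ?_⟩
  obtain ⟨h1, h2, h3, h4, h5⟩ := H w (by rw [hinteg (fun z => h (w, z))]; exact hc)
  simp only [hDv] at h1 h2 h3
  refine ⟨h1, h2, h3, ?_, ?_⟩
  · intro ψ δ K hψ hδ hψδ hψK
    have := h4 (fun x => ψ (eX x)) δ K (hψ.comp eX.measurable) hδ (fun _ => hψδ _) (fun _ => hψK _)
    rw [heX.integral_comp eX.measurableEmbedding, hinteg (fun z => h (w, z))] at this
    rw [← hinteg (fun z => h (w, z) * Real.log (ψ (πX' z)))]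
    simpa only [hX] using this
  · intro ψ δ K hψ hδ hψδ hψK
    have := h5 (fun x => ψ (eY x)) δ K (hψ.comp eY.measurable) hδ (fun _ => hψδ _) (fun _ => hψK _)
    rw [heY.integral_comp eY.measurableEmbedding, hinteg (fun z => h (w, z))] at this
    rw [← hinteg (fun z => h (w, z) * Real.log (ψ (πY' z)))]
    simpa only [hY] using this

universe u v
lemma good_n {X : Type u} {Y : Type v} [MeasurableSpace X] [MeasurableSpace Y] [StandardBorelSpace X]
    [StandardBorelSpace Y] (P : Measure (X × Y)) [IsProbabilityMeasure P] (n : ℕ) :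
    Good.{max u v} (piM n P) fstv (piM n (m1 P)) sndv (piM n (m2 P))
      ((fun x : ℝ × ℝ × ℝ => (n : ℝ) • x) '' convexHull ℝ (Sset P)) := by
  have p1 : IsProbabilityMeasure (m1 P) := Measure.isProbabilityMeasure_map measurable_fst.aemeasurable
  have p2 : IsProbabilityMeasure (m2 P) := Measure.isProbabilityMeasure_map measurable_snd.aemeasurable
  induction n with
  | zero =>
    intro W _ h M hh h0 hM
    have hinteg : ∀ {T : Type (max u v)} [MeasurableSpace T] (Q : Measure T) (F : (Fin 0 → T) → ℝ),
        ∫ z, F z ∂(piM 0 Q) = F (fun i => i.elim0) := fun Q F => by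
      rw [piM, Measure.pi_of_empty, integral_dirac]
      congr 1
    refine ⟨fun _ => 0, fun _ => 0, measurable_const, measurable_const, fun w hc => ?_⟩
    have hD : Dv (piM 0 P) (fun z => h (w, z)) = 0 := by
      rw [hinteg] at hc
      rw [Dv, hinteg, hinteg, mul_div_cancel_left₀ _ hc.ne', sub_self]
    rw [hD]
    refine ⟨?_, le_rfl, le_rfl, ?_, ?_⟩
    · obtain ⟨x, hx⟩ := sset_nonempty P
      exact ⟨x, hx, by simp; rfl⟩
    · intro ψ δ K hψ hδ hψδ hψK
      rw [hinteg, hinteg, zero_add]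
      rw [piM, Measure.pi_of_empty, integral_dirac]
      apply le_of_eq
      congr 3; ext i; exact i.elim0
    · intro ψ δ K hψ hδ hψδ hψK
      rw [hinteg, hinteg, zero_add]
      rw [piM, Measure.pi_of_empty, integral_dirac]
      apply le_of_eq
      congr 3; ext i; exact i.elim0
  | succ n ih =>
    have q0 : IsProbabilityMeasure (piM n P) := by unfold piM; infer_instance
    have q1 : IsProbabilityMeasure (piM n (m1 P)) := by unfold piM; infer_instance
    have q2 : IsProbabilityMeasure (piM n (m2 P)) := by unfold piM; infer_instance
    have hconv := convex_convexHull ℝ (Sset P)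
    have mf : Measurable (fstv : (Fin n → X × Y) → Fin n → X) :=
      measurable_pi_lambda _ fun i => (measurable_pi_apply i).fst
    have ms : Measurable (sndv : (Fin n → X × Y) → Fin n → Y) :=
      measurable_pi_lambda _ fun i => (measurable_pi_apply i).snd
    have ht := good_tensor (K := (fun x : ℝ × ℝ × ℝ => ((n + 1 : ℕ) : ℝ) • x) '' convexHull ℝ (Sset P))
      measurable_fst mf measurable_snd ms (hconv.smul (n : ℝ)) (by
        rintro x hx _ ⟨y, hy, rfl⟩
        have hn : (0 : ℝ) < (n : ℝ) + 1 := by positivity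
        refine ⟨((1 : ℝ) / (n + 1)) • x + ((n : ℝ) / (n + 1)) • y,
          hconv hx hy (by positivity) (by positivity) (by field_simp; ring), ?_⟩
        simp only [smul_add, smul_smul]
        push_cast
        congr 1
        · rw [mul_one_div_cancel hn.ne', one_smul]
        · rw [mul_div_cancel₀ _ hn.ne']) (good_one P) ih
    refine ht.transfer (MeasurableEquiv.piFinSuccAbove (fun _ => X × Y) 0).symm
      (MeasurableEquiv.piFinSuccAbove (fun _ => X) 0).symm
      (MeasurableEquiv.piFinSuccAbove (fun _ => Y) 0).symm
      ((measurePreserving_piFinSuccAbove (fun _ => P) 0).symm _)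
      ((measurePreserving_piFinSuccAbove (fun _ => m1 P) 0).symm _)
      ((measurePreserving_piFinSuccAbove (fun _ => m2 P) 0).symm _) ?_ ?_
    · rintro ⟨z1, z2⟩
      ext i
      refine Fin.cases ?_ (fun i => ?_) i <;> simp [fstv, MeasurableEquiv.piFinSuccAbove, Fin.insertNthEquiv]
    · rintro ⟨z1, z2⟩
      ext i
      refine Fin.cases ?_ (fun i => ?_) i <;> simp [sndv, MeasurableEquiv.piFinSuccAbove, Fin.insertNthEquiv]


lemma gibbs_le {Z T : Type*} [MeasurableSpace Z] [MeasurableSpace T] {μ : Measure Z}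
    [IsProbabilityMeasure μ] {π : Z → T} (hπ : Measurable π)
    {ν : Measure T} [IsProbabilityMeasure ν] {H : Z → ℝ} {a M : ℝ}
    (hH : Measurable H) (hH0 : ∀ z, 0 ≤ H z) (hHM : ∀ z, H z ≤ M)
    (hc : 0 < ∫ z, H z ∂μ) (hG : Gibbs μ π ν H a) {G : T → ℝ} {δ K J : ℝ} (hGm : Measurable G)
    (hG0 : ∀ x, 0 ≤ G x) (hGK : ∀ x, G x ≤ K) (hδ : 0 < δ) (hGδ : ∀ z, H z ≠ 0 → δ ≤ G (π z))
    (hJ : 0 < J) (hGJ : ∫ x, G x ∂ν ≤ J) :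
    ∫ z, H z * Real.log (G (π z)) ∂μ ≤ (∫ z, H z ∂μ) * (a + Real.log J) := by
  have hM0 : 0 ≤ M := by
    obtain ⟨z⟩ : Nonempty Z := nonempty_of_isProbabilityMeasure μ
    exact (hH0 z).trans (hHM z)
  have hGi : Integrable G ν := integrable_bdd hGm K fun x => by
    rw [abs_of_nonneg (hG0 x)]; exact hGK x
  have main : ∀ ε : ℝ, 0 < ε →
      ∫ z, H z * Real.log (G (π z)) ∂μ ≤ (∫ z, H z ∂μ) * (a + Real.log (J + ε)) := by
    intro ε hε
    have h1 := hG (fun x => G x + ε) ε (K + ε) (hGm.add_const ε) hε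
      (fun x => by linarith [hG0 x]) (fun x => by linarith [hGK x])
    have h2 : ∫ x, (G x + ε) ∂ν ≤ J + ε := by
      rw [integral_add hGi (integrable_const _)]; simpa using hGJ
    have h2' : 0 < ∫ x, (G x + ε) ∂ν := by
      rw [integral_add hGi (integrable_const _)]
      have : 0 ≤ ∫ x, G x ∂ν := integral_nonneg fun x => hG0 x
      simp; linarith
    have h3 := Real.log_le_log h2' h2
    obtain ⟨B1, hB10, hB1⟩ := log_bdd (K := K) hδ
    obtain ⟨B2, hB20, hB2⟩ := log_bdd (K := K + ε) hε
    have h4 : ∫ z, H z * Real.log (G (π z)) ∂μ ≤ ∫ z, H z * Real.log (G (π z) + ε) ∂μ := by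
      refine integral_mono (integrable_bdd (hH.mul (Real.measurable_log.comp (hGm.comp hπ)))
        (M * B1) fun z => ?_) (integrable_bdd
        (hH.mul (Real.measurable_log.comp ((hGm.comp hπ).add_const ε))) (M * B2) fun z => ?_)
        fun z => ?_
      · show |H z * Real.log (G (π z))| ≤ _
        by_cases hz : H z = 0
        · rw [hz]; simp; positivity
        · rw [abs_mul, abs_of_nonneg (hH0 z)]
          exact mul_le_mul (hHM z) (hB1 _ (hGδ z hz) (hGK _)) (abs_nonneg _) hM0
      · show |H z * Real.log (G (π z) + ε)| ≤ _
        rw [abs_mul, abs_of_nonneg (hH0 z)]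
        exact mul_le_mul (hHM z) (hB2 _ (by linarith [hG0 (π z)]) (by linarith [hGK (π z)]))
          (abs_nonneg _) hM0
      · show H z * Real.log (G (π z)) ≤ H z * Real.log (G (π z) + ε)
        by_cases hz : H z = 0
        · rw [hz]; simp
        · exact mul_le_mul_of_nonneg_left
            (Real.log_le_log (hδ.trans_le (hGδ z hz)) (by linarith)) (hH0 z)
    refine h4.trans (h1.trans (mul_le_mul_of_nonneg_left ?_ hc.le))
    linarith
  have hlim : Tendsto (fun ε : ℝ => (∫ z, H z ∂μ) * (a + Real.log (J + ε))) (𝓝[>] 0)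
      (𝓝 ((∫ z, H z ∂μ) * (a + Real.log J))) := by
    have : ContinuousAt (fun ε : ℝ => (∫ z, H z ∂μ) * (a + Real.log (J + ε))) 0 := by
      apply ContinuousAt.mul continuousAt_const
      apply ContinuousAt.add continuousAt_const
      apply ContinuousAt.log (by fun_prop)
      simpa using hJ.ne'
    have h := this.tendsto
    simp only [add_zero] at h
    exact h.mono_left nhdsWithin_le_nhds
  refine ge_of_tendsto hlim ?_
  filter_upwards [self_mem_nhdsWithin] with ε hε using main ε hε

/-- Truncation. -/
def trunc {T : Type*} (f : T → ℝ) (k : ℕ) (x : T) : ℝ :=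
  if 1 / ((k : ℝ) + 1) ≤ f x ∧ f x ≤ (k : ℝ) + 1 then f x else 0

section trunc
variable {T : Type*} {f : T → ℝ}
lemma trunc_meas [MeasurableSpace T] (hf : Measurable f) (k : ℕ) : Measurable (trunc f k) := by
  unfold trunc
  exact Measurable.ite ((measurableSet_le measurable_const hf).inter
    (measurableSet_le hf measurable_const)) hf measurable_const
lemma trunc_nonneg (hf : ∀ x, 0 ≤ f x) (k : ℕ) (x : T) : 0 ≤ trunc f k x := by
  unfold trunc; split_ifs; exacts [hf x, le_rfl]
lemma trunc_le (k : ℕ) (x : T) : trunc f k x ≤ (k : ℝ) + 1 := by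
  unfold trunc; split_ifs with h; exacts [h.2, by positivity]
lemma trunc_le_self (hf : ∀ x, 0 ≤ f x) (k : ℕ) (x : T) : trunc f k x ≤ f x := by
  unfold trunc; split_ifs with h; exacts [le_rfl, hf x]
lemma le_trunc (k : ℕ) (x : T) (h : trunc f k x ≠ 0) : 1 / ((k : ℝ) + 1) ≤ trunc f k x := by
  unfold trunc at *; split_ifs at * with h1; exacts [h1.1, absurd rfl h]
lemma trunc_eventually (hf : ∀ x, 0 ≤ f x) (x : T) : ∀ᶠ k in atTop, trunc f k x = f x := by
  rcases (hf x).lt_or_eq with h | h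
  · obtain ⟨N1, hN1⟩ := exists_nat_gt (f x)
    obtain ⟨N2, hN2⟩ := exists_nat_one_div_lt h
    filter_upwards [eventually_ge_atTop (max N1 N2)] with k hk
    have h1 : (N1 : ℝ) ≤ k := by exact_mod_cast (le_max_left _ _).trans hk
    have h2 : (N2 : ℝ) ≤ k := by exact_mod_cast (le_max_right _ _).trans hk
    rw [trunc, if_pos]
    refine ⟨le_trans ?_ hN2.le, by linarith⟩
    apply one_div_le_one_div_of_le <;> [positivity; linarith]
  · refine Eventually.of_forall fun k => ?_
    rw [trunc, ← h]; simp
end trunc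

lemma lint_pow_ne_zero {T : Type*} [MeasurableSpace T] {ν : Measure T} {f : T → ℝ}
    (hf : Adm ν f) {r : ℝ} (_ : 0 < r) : ∫⁻ x, ENNReal.ofReal (f x) ^ r ∂ν ≠ 0 := by
  intro h
  rw [lintegral_eq_zero_iff (hf.1.ennreal_ofReal.pow_const r)] at h
  apply hf.2.2
  filter_upwards [h] with x hx
  simp only [Pi.zero_apply] at hx
  rw [ENNReal.rpow_eq_zero_iff] at hx
  rcases hx with hx | hx
  · exact le_antisymm (ENNReal.ofReal_eq_zero.1 hx.1) (hf.2.1 x)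
  · exact absurd hx.1 ENNReal.ofReal_ne_top

lemma rnorm_ne_zero {T : Type*} [MeasurableSpace T] {ν : Measure T} {f : T → ℝ}
    (hf : Adm ν f) {r : ℝ} (hr : 0 < r) : rnorm ν f r ≠ 0 := by
  unfold rnorm enorm
  intro h
  rw [ENNReal.rpow_eq_zero_iff] at h
  rcases h with h | h
  · exact lint_pow_ne_zero hf hr h.1
  · have : 0 < 1 / r := by positivity
    linarith [h.2]

lemma rnorm_ne_top_iff {T : Type*} [MeasurableSpace T] {ν : Measure T} {f : T → ℝ}
    {r : ℝ} (hr : 0 < r) : rnorm ν f r ≠ ⊤ ↔ ∫⁻ x, ENNReal.ofReal (f x) ^ r ∂ν ≠ ⊤ := by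
  unfold rnorm enorm
  rw [Ne, ENNReal.rpow_eq_top_iff_of_pos (by positivity)]

lemma log_rnorm {T : Type*} [MeasurableSpace T] {ν : Measure T} {f : T → ℝ}
    (hf : Adm ν f) {r : ℝ} (hr : 0 < r) (ht : rnorm ν f r ≠ ⊤) :
    Real.log (∫⁻ x, ENNReal.ofReal (f x) ^ r ∂ν).toReal = r * Real.log (rnorm ν f r).toReal := by
  have h1 := (rnorm_ne_top_iff hr).1 ht
  unfold rnorm enorm
  rw [← ENNReal.toReal_rpow, Real.log_rpow (ENNReal.toReal_pos (lint_pow_ne_zero hf hr) h1)]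
  field_simp

lemma elog_coe {x : ℝ≥0∞} (h0 : x ≠ 0) (ht : x ≠ ⊤) : elog x = (Real.log x.toReal : ℝ) := by
  rw [elog, if_neg h0, if_neg ht]

section sideF
variable {Z T : Type*} [MeasurableSpace Z] [MeasurableSpace T] {μ : Measure Z}
    [IsProbabilityMeasure μ] {π : Z → T}
    {ν : Measure T} [IsProbabilityMeasure ν] {H : Z → ℝ} {a M : ℝ}
    {f : T → ℝ} {k : ℕ}

lemma trunc_pow_log {r J : ℝ} (hπ : Measurable π)
    (hH : Measurable H) (hH0 : ∀ z, 0 ≤ H z) (hHM : ∀ z, H z ≤ M)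
    (hc : 0 < ∫ z, H z ∂μ) (hG : Gibbs μ π ν H a) (hf : Adm ν f)
    (hHf : ∀ z, H z ≠ 0 → trunc f k (π z) ≠ 0) (hr : 0 < r) (hJ : 0 < J)
    (hI : ∫ x, trunc f k x ^ r ∂ν ≤ J) :
    r * ∫ z, H z * Real.log (trunc f k (π z)) ∂μ ≤ (∫ z, H z ∂μ) * (a + Real.log J) := by
  have := gibbs_le hπ hH hH0 hHM hc hG (G := fun x => trunc f k x ^ r)
    (δ := (1 / ((k : ℝ) + 1)) ^ r) (K := ((k : ℝ) + 1) ^ r)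
    ((trunc_meas hf.1 k).pow_const r) (fun x => Real.rpow_nonneg (trunc_nonneg hf.2.1 k x) _)
    (fun x => Real.rpow_le_rpow (trunc_nonneg hf.2.1 k x) (trunc_le k x) hr.le)
    (by positivity)
    (fun z hz => Real.rpow_le_rpow (by positivity) (le_trunc k _ (hHf z hz)) hr.le) hJ hI
  rw [← integral_const_mul]
  refine le_trans (le_of_eq ?_) this
  congr 1
  ext z
  by_cases hz : H z = 0
  · simp [hz]
  · have h1 := le_trunc k _ (hHf z hz)
    have : 0 < trunc f k (π z) := lt_of_lt_of_le (by positivity) h1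
    rw [Real.log_rpow this]; ring

lemma trunc_pow_rnorm {r : ℝ} (hπ : Measurable π)
    (hH : Measurable H) (hH0 : ∀ z, 0 ≤ H z) (hHM : ∀ z, H z ≤ M)
    (hc : 0 < ∫ z, H z ∂μ) (hG : Gibbs μ π ν H a) (hf : Adm ν f)
    (hHf : ∀ z, H z ≠ 0 → trunc f k (π z) ≠ 0) (hr : 0 < r) (ht : rnorm ν f r ≠ ⊤) :
    ∫ z, H z * Real.log (trunc f k (π z)) ∂μ ≤
      (∫ z, H z ∂μ) * (a / r + Real.log (rnorm ν f r).toReal) := by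
  have h1 := (rnorm_ne_top_iff hr).1 ht
  have := trunc_pow_log (J := (∫⁻ x, ENNReal.ofReal (f x) ^ r ∂ν).toReal) hπ hH hH0 hHM hc hG hf
    hHf hr (ENNReal.toReal_pos (lint_pow_ne_zero hf hr) h1) (by
      rw [integral_eq_lintegral_of_nonneg_ae
        (Eventually.of_forall fun x => Real.rpow_nonneg (trunc_nonneg hf.2.1 k x) _)
        ((trunc_meas hf.1 k).pow_const r).aestronglyMeasurable]
      refine ENNReal.toReal_mono h1 (lintegral_mono fun x => ?_)
      rw [← ENNReal.ofReal_rpow_of_nonneg (trunc_nonneg hf.2.1 k x) hr.le]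
      exact ENNReal.rpow_le_rpow (ENNReal.ofReal_le_ofReal (trunc_le_self hf.2.1 k x)) hr.le)
  rw [log_rnorm hf hr ht] at this
  have h2 : (∫ z, H z ∂μ) * (a / r + Real.log (rnorm ν f r).toReal) =
      ((∫ z, H z ∂μ) * (a + r * Real.log (rnorm ν f r).toReal)) / r := by field_simp
  rw [h2, le_div_iff₀ hr]
  linarith

lemma trunc_inf (hπ : Measurable π)
    (hH : Measurable H) (hH0 : ∀ z, 0 ≤ H z) (hHM : ∀ z, H z ≤ M)
    (hc : 0 < ∫ z, H z ∂μ) (hG : Gibbs μ π ν H a) (hf : Adm ν f)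
    (hHf : ∀ z, H z ≠ 0 → trunc f k (π z) ≠ 0) {N : ℝ} (hN : 0 < N) (hfN : ∀ᵐ x ∂ν, f x ≤ N) :
    ∫ z, H z * Real.log (trunc f k (π z)) ∂μ ≤ (∫ z, H z ∂μ) * Real.log N := by
  have main : ∀ r : ℝ, 0 < r → ∫ z, H z * Real.log (trunc f k (π z)) ∂μ ≤
      (∫ z, H z ∂μ) * (a * r⁻¹ + Real.log N) := by
    intro r hr
    have hb : ∀ x, |trunc f k x ^ r| ≤ ((k : ℝ) + 1) ^ r := fun x => by
      rw [abs_of_nonneg (Real.rpow_nonneg (trunc_nonneg hf.2.1 k x) _)]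
      exact Real.rpow_le_rpow (trunc_nonneg hf.2.1 k x) (trunc_le k x) hr.le
    have := trunc_pow_log (J := N ^ r) hπ hH hH0 hHM hc hG hf hHf hr (by positivity) (by
      have := integral_mono_ae (μ := ν) (integrable_bdd ((trunc_meas hf.1 k).pow_const r) _ hb)
        (integrable_const (N ^ r)) (by
          filter_upwards [hfN] with x hx
          exact Real.rpow_le_rpow (trunc_nonneg hf.2.1 k x)
            ((trunc_le_self hf.2.1 k x).trans hx) hr.le)
      simpa using this)
    rw [Real.log_rpow hN] at this
    have h2 : (∫ z, H z ∂μ) * (a * r⁻¹ + Real.log N) =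
      ((∫ z, H z ∂μ) * (a + r * Real.log N)) / r := by field_simp
    rw [h2, le_div_iff₀ hr]
    linarith
  have hlim : Tendsto (fun r : ℝ => (∫ z, H z ∂μ) * (a * r⁻¹ + Real.log N)) atTop
      (𝓝 ((∫ z, H z ∂μ) * (a * 0 + Real.log N))) :=
    ((tendsto_inv_atTop_zero.const_mul a).add_const _).const_mul _
  rw [mul_zero, zero_add] at hlim
  refine ge_of_tendsto hlim ?_
  filter_upwards [eventually_gt_atTop 0] with r hr using main r hr

lemma side_zero (hπ : Measurable π)
    (hH : Measurable H) (hH0 : ∀ z, 0 ≤ H z) (hHM : ∀ z, H z ≤ M)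
    (hc : 0 < ∫ z, H z ∂μ) (hG : Gibbs μ π ν H a) (hf : Adm ν f)
    (hHf : ∀ z, H z ≠ 0 → trunc f k (π z) ≠ 0) {p A : ℝ} (hp : 0 < p)
    (hf1 : (A : EReal) ≤ entE ν f p 0) : A ≤ a := by
  have hms : MeasurableSet {x | 0 < f x} := measurableSet_lt measurable_const hf.1
  have hm0 : ν {x | 0 < f x} ≠ 0 := by
    intro h
    apply hf.2.2
    have : ∀ᵐ x ∂ν, ¬ 0 < f x := by rw [ae_iff]; simpa using h
    filter_upwards [this] with x hx
    exact le_antisymm (not_lt.1 hx) (hf.2.1 x)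
  have hmt : ν {x | 0 < f x} ≠ ⊤ := measure_ne_top _ _
  have h1 : entE ν f p 0 = ((- Real.log (ν {x | 0 < f x}).toReal : ℝ) : EReal) := by
    rw [entE, if_neg (by simp), ent, if_neg (by simpa using hp.ne), if_pos (by simp),
      elog_coe hm0 hmt, EReal.coe_neg]
  rw [h1, EReal.coe_le_coe_iff] at hf1
  have := gibbs_le hπ hH hH0 hHM hc hG (G := {x | 0 < f x}.indicator fun _ => (1 : ℝ))
    (δ := 1) (K := 1) (J := (ν {x | 0 < f x}).toReal) (measurable_const.indicator hms)
    (fun x => indicator_nonneg (fun _ _ => zero_le_one) x)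
    (fun x => by by_cases hx : x ∈ {x | 0 < f x} <;> simp [hx]) one_pos
    (fun z hz => by
      have h3 := le_trunc k _ (hHf z hz)
      have h4 : 0 < f (π z) := lt_of_lt_of_le (by positivity) (h3.trans (trunc_le_self hf.2.1 k _))
      have h5 : π z ∈ {x | 0 < f x} := h4
      rw [indicator_of_mem h5])
    (ENNReal.toReal_pos hm0 hmt) (by
      rw [integral_indicator hms]; simp [Measure.real])
  have hz : ∫ z, H z * Real.log ({x | 0 < f x}.indicator (fun _ => (1 : ℝ)) (π z)) ∂μ = 0 := by
    refine integral_eq_zero_of_ae (Eventually.of_forall fun z => ?_)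
    simp only [Pi.zero_apply]
    by_cases hx : π z ∈ {x | 0 < f x}
    · rw [indicator_of_mem hx]; simp
    · rw [indicator_of_notMem hx]; simp
  rw [hz] at this
  have h6 := nonneg_of_mul_nonneg_right this hc
  linarith

lemma side_main (hπ : Measurable π)
    (hH : Measurable H) (hH0 : ∀ z, 0 ≤ H z) (hHM : ∀ z, H z ≤ M)
    (hc : 0 < ∫ z, H z ∂μ) (hG : Gibbs μ π ν H a) (hf : Adm ν f)
    (hHf : ∀ z, H z ≠ 0 → trunc f k (π z) ≠ 0) {p A : ℝ} (hp : 0 < p) {ps : ℝ≥0∞}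
    (hf1 : ps ≤ ENNReal.ofReal p → (A : EReal) ≤ entE ν f p ps)
    (hf2 : ENNReal.ofReal p ≤ ps → entE ν f p ps ≤ (A : EReal))
    (ht : rnorm ν f p ≠ ⊤) (h0 : ps = 0 → a ≤ A) :
    ∫ z, H z * Real.log (trunc f k (π z)) ∂μ ≤ (∫ z, H z ∂μ) *
      (Real.log (rnorm ν f p).toReal + A / p + (ps⁻¹).toReal * (a - A)) := by
  have hel := elog_coe (rnorm_ne_zero hf hp) ht
  by_cases hps0 : ps = 0
  · have := trunc_pow_rnorm hπ hH hH0 hHM hc hG hf hHf hp ht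
    refine this.trans (mul_le_mul_of_nonneg_left ?_ hc.le)
    have h1 := div_le_div_of_nonneg_right (h0 hps0) hp.le
    simp only [hps0, ENNReal.inv_zero, ENNReal.toReal_top]
    linarith
  by_cases hpst : ps = ⊤
  · have h1 := hf2 (by rw [hpst]; exact le_top)
    rw [entE, if_pos hpst, entTop] at h1
    by_cases hinf : rnormInf ν f = ⊤
    · rw [if_pos hinf, if_pos hp] at h1
      exact absurd (top_le_iff.1 h1) (EReal.coe_ne_top _)
    rw [if_neg hinf] at h1
    have hae : ∀ᵐ x ∂ν, ENNReal.ofReal (f x) ≤ rnormInf ν f := ENNReal.ae_le_essSup _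
    have hinf0 : rnormInf ν f ≠ 0 := by
      intro h
      apply hf.2.2
      filter_upwards [hae] with x hx
      rw [h] at hx
      exact le_antisymm (ENNReal.ofReal_eq_zero.1 (le_antisymm hx zero_le)) (hf.2.1 x)
    rw [hel, elog_coe hinf0 hinf, ← EReal.coe_sub, ← EReal.coe_mul, EReal.coe_le_coe_iff] at h1
    have hN := ENNReal.toReal_pos hinf0 hinf
    have := trunc_inf hπ hH hH0 hHM hc hG hf hHf hN (by
      filter_upwards [hae] with x hx
      have := ENNReal.toReal_mono hinf hx
      rwa [ENNReal.toReal_ofReal (hf.2.1 x)] at this)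
    refine this.trans (mul_le_mul_of_nonneg_left ?_ hc.le)
    simp only [hpst, ENNReal.inv_top, ENNReal.toReal_zero, zero_mul, add_zero]
    have h2 : Real.log (rnormInf ν f).toReal - Real.log (rnorm ν f p).toReal ≤ A / p := by
      rw [le_div_iff₀ hp]; linarith
    linarith
  obtain ⟨r, hr, hrps⟩ : ∃ r : ℝ, 0 < r ∧ ps = ENNReal.ofReal r :=
    ⟨ps.toReal, ENNReal.toReal_pos hps0 hpst, (ENNReal.ofReal_toReal hpst).symm⟩
  have hu : (ps⁻¹).toReal = 1 / r := by
    rw [ENNReal.toReal_inv, hrps, ENNReal.toReal_ofReal hr.le, one_div]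
  rw [hu]
  by_cases hrp : r = p
  · have := trunc_pow_rnorm hπ hH hH0 hHM hc hG hf hHf hp ht
    refine this.trans (mul_le_mul_of_nonneg_left (le_of_eq ?_) hc.le)
    rw [hrp]; field_simp; ring
  have hent : entE ν f p ps = ((p * r / (p - r) : ℝ) : EReal) *
      (elog (rnorm ν f p) - elog (rnorm ν f r)) := by
    rw [entE, if_neg hpst, hrps, ENNReal.toReal_ofReal hr.le, ent, if_neg hrp, if_neg hr.ne']
  rw [hent, hel] at hf1 hf2
  have hpr : p - r ≠ 0 := fun h => hrp (by linarith)
  have htr : rnorm ν f r ≠ ⊤ := by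
    intro h
    have hs : ((Real.log (rnorm ν f p).toReal : ℝ) : EReal) - elog (rnorm ν f r) = ⊥ := by
      rw [h, elog, if_neg (by simp), if_pos rfl]; rfl
    rw [hs] at hf1 hf2
    rcases lt_or_gt_of_ne hrp with hlt | hlt
    · have := hf1 (by rw [hrps]; exact ENNReal.ofReal_le_ofReal hlt.le)
      rw [EReal.coe_mul_bot_of_pos (div_pos (mul_pos hp hr) (by linarith))] at this
      exact absurd (le_bot_iff.1 this) (EReal.coe_ne_bot _)
    · have := hf2 (by rw [hrps]; exact ENNReal.ofReal_le_ofReal hlt.le)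
      rw [EReal.coe_mul_bot_of_neg (div_neg_of_pos_of_neg (mul_pos hp hr) (by linarith))] at this
      exact absurd (top_le_iff.1 this) (EReal.coe_ne_top _)
  rw [elog_coe (rnorm_ne_zero hf hr) htr, ← EReal.coe_sub, ← EReal.coe_mul,
    EReal.coe_le_coe_iff] at hf1 hf2
  have hkey : Real.log (rnorm ν f r).toReal ≤ Real.log (rnorm ν f p).toReal + A / p - A / r := by
    set lp := Real.log (rnorm ν f p).toReal
    set lr := Real.log (rnorm ν f r).toReal
    have e : A / p - A / r = A * ((r - p) / (p * r)) := by field_simp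
    rcases lt_or_gt_of_ne hrp with hlt | hlt
    · have := hf1 (by rw [hrps]; exact ENNReal.ofReal_le_ofReal hlt.le)
      have hpos : 0 < (p - r) / (p * r) := div_pos (by linarith) (mul_pos hp hr)
      have h2 := mul_le_mul_of_nonneg_right this hpos.le
      have h3 : p * r / (p - r) * (lp - lr) * ((p - r) / (p * r)) = lp - lr := by field_simp
      rw [h3] at h2
      have h4 : A * ((r - p) / (p * r)) = - (A * ((p - r) / (p * r))) := by ring
      linarith
    · have := hf2 (by rw [hrps]; exact ENNReal.ofReal_le_ofReal hlt.le)
      have hpos : 0 < (r - p) / (p * r) := div_pos (by linarith) (mul_pos hp hr)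
      have h2 := mul_le_mul_of_nonneg_right this hpos.le
      have h3 : p * r / (p - r) * (lp - lr) * ((r - p) / (p * r)) = lr - lp := by field_simp; ring
      rw [h3] at h2
      linarith
  have := trunc_pow_rnorm hπ hH hH0 hHM hc hG hf hHf hr htr
  refine this.trans (mul_le_mul_of_nonneg_left ?_ hc.le)
  have e : 1 / r * (a - A) = a / r - A / r := by ring
  rw [e]; linarith

end sideF

lemma ereal_mul_cases (u : ℝ≥0∞) (x : ℝ) (hu : u = ⊤ → 0 ≤ x) :
    ((u = ⊤ ∧ 0 < x) ∧ (u : EReal) * (x : EReal) = ⊤) ∨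
      ((u = ⊤ → x = 0) ∧ (u : EReal) * (x : EReal) = ((u.toReal * x : ℝ) : EReal)) := by
  by_cases h : u = ⊤
  · rcases (hu h).lt_or_eq with h1 | h1
    · left
      refine ⟨⟨h, h1⟩, ?_⟩
      rw [h, EReal.coe_ennreal_top, EReal.top_mul_coe_of_pos h1]
    · right
      refine ⟨fun _ => h1.symm, ?_⟩
      rw [← h1]; simp
  · right
    refine ⟨fun h' => absurd h' h, ?_⟩
    lift u to ℝ≥0 using h
    rw [EReal.coe_mul]; rfl

lemma grad_real {θ : EReal} (hθ : θ ≠ ⊥) {u v : ℝ≥0∞} {x y d : ℝ} (hu : u = ⊤ → 0 ≤ x)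
    (hv : v = ⊤ → 0 ≤ y)
    (h : θ + (u : EReal) * (x : EReal) + (v : EReal) * (y : EReal) ≤ (d : EReal)) :
    θ ≠ ⊤ ∧ (u = ⊤ → x = 0) ∧ (v = ⊤ → y = 0) ∧
      θ.toReal + u.toReal * x + v.toReal * y ≤ d := by
  rcases ereal_mul_cases v y hv with ⟨-, h2⟩ | ⟨h2, h2'⟩
  · exfalso
    rcases ereal_mul_cases u x hu with ⟨-, h1⟩ | ⟨h1, h1'⟩
    · rw [h1, h2, EReal.add_top_of_ne_bot hθ] at h
      exact EReal.coe_ne_top _ (top_le_iff.1 h)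
    · rw [h1', h2, EReal.add_top_of_ne_bot] at h
      · exact EReal.coe_ne_top _ (top_le_iff.1 h)
      · rw [Ne, EReal.add_eq_bot_iff]; exact fun h => h.elim hθ (EReal.coe_ne_bot _)
  · rcases ereal_mul_cases u x hu with ⟨-, h1⟩ | ⟨h1, h1'⟩
    · rw [h1, h2', EReal.add_top_of_ne_bot hθ, EReal.top_add_coe] at h
      exact absurd (top_le_iff.1 h) (EReal.coe_ne_top _)
    · have hT : θ ≠ ⊤ := by
        intro hT
        rw [hT, h1', h2', EReal.top_add_coe, EReal.top_add_coe] at h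
        exact absurd (top_le_iff.1 h) (EReal.coe_ne_top _)
      refine ⟨hT, h1, h2, ?_⟩
      rw [h1', h2', ← EReal.coe_toReal hT hθ, ← EReal.coe_add, ← EReal.coe_add,
        EReal.coe_le_coe_iff] at h
      exact h

/-- The bound for truncated functions. -/
lemma trunc_bound {X Y : Type*} [MeasurableSpace X] [MeasurableSpace Y] [StandardBorelSpace X]
    [StandardBorelSpace Y] (P : Measure (X × Y)) [IsProbabilityMeasure P]
    (α β : ℝ) (ps qs : ℝ≥0∞) (hgrad : IsSubgrad2 (fun s t => ThetaL P s t) α β ps⁻¹ qs⁻¹)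
    (p q : ℝ) (hp : 0 < p) (hq : 0 < q) (n : ℕ) (hn : 1 ≤ n)
    (f : (Fin n → X) → ℝ) (g : (Fin n → Y) → ℝ)
    (hf : Adm (piM n (m1 P)) f) (hg : Adm (piM n (m2 P)) g)
    (hf1 : ps ≤ ENNReal.ofReal p →
      (((n : ℝ) * α : ℝ) : EReal) ≤ entE (piM n (m1 P)) f p ps)
    (hf2 : ENNReal.ofReal p ≤ ps →
      entE (piM n (m1 P)) f p ps ≤ (((n : ℝ) * α : ℝ) : EReal))
    (hg1 : qs ≤ ENNReal.ofReal q →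
      (((n : ℝ) * β : ℝ) : EReal) ≤ entE (piM n (m2 P)) g q qs)
    (hg2 : ENNReal.ofReal q ≤ qs →
      entE (piM n (m2 P)) g q qs ≤ (((n : ℝ) * β : ℝ) : EReal))
    (hbot : ThetaL P α β ≠ ⊥) (k : ℕ)
    (hc : 0 < ∫ z, trunc f k (fstv z) * trunc g k (sndv z) ∂(piM n P)) :
    ThetaL P α β ≠ ⊤ ∧ (rnorm (piM n (m1 P)) f p ≠ ⊤ → rnorm (piM n (m2 P)) g q ≠ ⊤ →
      ∫ z, trunc f k (fstv z) * trunc g k (sndv z) ∂(piM n P) ≤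
        Real.exp (-(n : ℝ) * ((ThetaL P α β).toReal - (α / p + β / q))) *
          (rnorm (piM n (m1 P)) f p).toReal * (rnorm (piM n (m2 P)) g q).toReal) := by
  have p1 : IsProbabilityMeasure (m1 P) := Measure.isProbabilityMeasure_map measurable_fst.aemeasurable
  have p2 : IsProbabilityMeasure (m2 P) := Measure.isProbabilityMeasure_map measurable_snd.aemeasurable
  have q0 : IsProbabilityMeasure (piM n P) := by unfold piM; infer_instance
  have q1 : IsProbabilityMeasure (piM n (m1 P)) := by unfold piM; infer_instance
  have q2 : IsProbabilityMeasure (piM n (m2 P)) := by unfold piM; infer_instance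
  have mf : Measurable (fstv : (Fin n → X × Y) → Fin n → X) :=
    measurable_pi_lambda _ fun i => (measurable_pi_apply i).fst
  have ms : Measurable (sndv : (Fin n → X × Y) → Fin n → Y) :=
    measurable_pi_lambda _ fun i => (measurable_pi_apply i).snd
  set H : (Fin n → X × Y) → ℝ := fun z => trunc f k (fstv z) * trunc g k (sndv z) with hHdef
  set M : ℝ := ((k : ℝ) + 1) * ((k : ℝ) + 1)
  have hF0 := trunc_nonneg hf.2.1 k
  have hG0 := trunc_nonneg hg.2.1 k
  have hH : Measurable H := ((trunc_meas hf.1 k).comp mf).mul ((trunc_meas hg.1 k).comp ms)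
  have hH0 : ∀ z, 0 ≤ H z := fun z => mul_nonneg (hF0 _) (hG0 _)
  have hHM : ∀ z, H z ≤ M := fun z =>
    mul_le_mul (trunc_le k _) (trunc_le k _) (hG0 _) (by positivity)
  obtain ⟨a', b', -, -, hgood⟩ := good_n P n PUnit (fun y => H y.2) M (hH.comp measurable_snd)
    (fun _ => hH0 _) (fun _ => hHM _)
  obtain ⟨hmem, -, -, hGf, hGg⟩ := hgood ⟨⟩ hc
  clear hgood
  generalize a' ⟨⟩ = a at *
  generalize b' ⟨⟩ = b at *
  obtain ⟨x, hx, hxe⟩ := hmem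
  simp only [Prod.ext_iff, Prod.smul_fst, Prod.smul_snd, smul_eq_mul] at hxe
  obtain ⟨ea, eb, ed⟩ := hxe
  have hn0 : (0 : ℝ) < n := by exact_mod_cast hn
  have ha0 := Gibbs.nonneg hGf hc
  have hb0 := Gibbs.nonneg hGg hc
  have hx1 : 0 ≤ x.1 := nonneg_of_mul_nonneg_right (ea ▸ ha0) hn0
  have hx2 : 0 ≤ x.2.1 := nonneg_of_mul_nonneg_right (eb ▸ hb0) hn0
  have hHf : ∀ z, H z ≠ 0 → trunc f k (fstv z) ≠ 0 := fun z hz => left_ne_zero_of_mul hz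
  have hHg : ∀ z, H z ≠ 0 → trunc g k (sndv z) ≠ 0 := fun z hz => right_ne_zero_of_mul hz
  have hu : ps⁻¹ = ⊤ → 0 ≤ x.1 - α := by
    intro h
    rw [ENNReal.inv_eq_top] at h
    subst h
    have := side_zero mf hH hH0 hHM hc hGf hf hHf hp (hf1 zero_le)
    rw [← ea] at this
    linarith [le_of_mul_le_mul_left this hn0]
  have hv : qs⁻¹ = ⊤ → 0 ≤ x.2.1 - β := by
    intro h
    rw [ENNReal.inv_eq_top] at h
    subst h
    have := side_zero ms hH hH0 hHM hc hGg hg hHg hq (hg1 zero_le)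
    rw [← eb] at this
    linarith [le_of_mul_le_mul_left this hn0]
  obtain ⟨hT, hu0, hv0, hreal⟩ := grad_real hbot hu hv
    ((hgrad x.1 x.2.1 hx1 hx2).trans (theta_le P hx))
  refine ⟨hT, fun htf htg => ?_⟩
  have hLf := side_main mf hH hH0 hHM hc hGf hf hHf hp hf1 hf2 htf (fun h => by
    have := hu0 (by rw [h]; simp)
    have h2 : x.1 = α := by linarith
    rw [← ea, h2])
  have hLg := side_main ms hH hH0 hHM hc hGg hg hHg hq hg1 hg2 htg (fun h => by
    have := hv0 (by rw [h]; simp)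
    have h2 : x.2.1 = β := by linarith
    rw [← eb, h2])
  have hNf := ENNReal.toReal_pos (rnorm_ne_zero hf hp) htf
  have hNg := ENNReal.toReal_pos (rnorm_ne_zero hg hq) htg
  have hk1 : 0 < 1 / ((k : ℝ) + 1) := by positivity
  obtain ⟨B, hB0, hB⟩ := log_bdd (K := (k : ℝ) + 1) hk1
  have if1 : Integrable (fun z => H z * Real.log (trunc f k (fstv z))) (piM n P) :=
    integrable_bdd (hH.mul (Real.measurable_log.comp ((trunc_meas hf.1 k).comp mf))) (M * B)
      fun z => by
        by_cases hz : H z = 0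
        · simp only [hz, zero_mul, abs_zero]; positivity
        · rw [abs_mul, abs_of_nonneg (hH0 z)]
          exact mul_le_mul (hHM z) (hB _ (le_trunc k _ (hHf z hz)) (trunc_le k _)) (abs_nonneg _)
            (by positivity)
  have ig1 : Integrable (fun z => H z * Real.log (trunc g k (sndv z))) (piM n P) :=
    integrable_bdd (hH.mul (Real.measurable_log.comp ((trunc_meas hg.1 k).comp ms))) (M * B)
      fun z => by
        by_cases hz : H z = 0
        · simp only [hz, zero_mul, abs_zero]; positivity
        · rw [abs_mul, abs_of_nonneg (hH0 z)]
          exact mul_le_mul (hHM z) (hB _ (le_trunc k _ (hHg z hz)) (trunc_le k _)) (abs_nonneg _)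
            (by positivity)
  have hsum : ∫ z, H z * Real.log (H z) ∂(piM n P) =
      ∫ z, H z * Real.log (trunc f k (fstv z)) ∂(piM n P) +
      ∫ z, H z * Real.log (trunc g k (sndv z)) ∂(piM n P) := by
    rw [← integral_add if1 ig1]
    congr 1
    ext z
    by_cases hz : H z = 0
    · simp only [hz, zero_mul, add_zero]
    · rw [← mul_add, ← Real.log_mul (hHf z hz) (hHg z hz)]
  simp only [Dv] at ed
  rw [hsum] at ed
  set c := ∫ z, H z ∂(piM n P)
  set Lf := ∫ z, H z * Real.log (trunc f k (fstv z)) ∂(piM n P)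
  set Lg := ∫ z, H z * Real.log (trunc g k (sndv z)) ∂(piM n P)
  set lf := Real.log (rnorm (piM n (m1 P)) f p).toReal with hlf
  set lg := Real.log (rnorm (piM n (m2 P)) g q).toReal with hlg
  have h1 : (Lf + Lg) / c ≤ (lf + (n * α) / p + (ps⁻¹).toReal * (a - n * α)) +
      (lg + (n * β) / q + (qs⁻¹).toReal * (b - n * β)) := by
    rw [div_le_iff₀ hc]; linarith
  have h2 := mul_le_mul_of_nonneg_left hreal hn0.le
  have h3 : Real.log c ≤ -(n : ℝ) * ((ThetaL P α β).toReal - (α / p + β / q)) + lf + lg := by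
    rw [← ea, ← eb] at h1
    have e1 : (n * α) / p = n * (α / p) := by ring
    have e2 : (n * β) / q = n * (β / q) := by ring
    rw [e1, e2] at h1
    nlinarith
  rw [← Real.exp_log hc]
  refine (Real.exp_le_exp.2 h3).trans (le_of_eq ?_)
  rw [Real.exp_add, Real.exp_add, hlf, hlg, Real.exp_log hNf, Real.exp_log hNg]

/-- Strong forward Brascamp–Lieb inequality, two-function version with
envelopes; Theorem `thm:strongBL`, part 1. -/
theorem statement2 [TopologicalSpace X] [PolishSpace X] [BorelSpace X]
    [TopologicalSpace Y] [PolishSpace Y] [BorelSpace Y]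
    (P : Measure (X × Y)) [IsProbabilityMeasure P]
    (hndX : ∀ x : X, m1 P ≠ Measure.dirac x) (hndY : ∀ y : Y, m2 P ≠ Measure.dirac y)
    (α β : ℝ) (hα0 : 0 ≤ α) (hαmax : (α : EReal) ≤ alphaMax (m1 P))
    (hβ0 : 0 ≤ β) (hβmax : (β : EReal) ≤ alphaMax (m2 P))
    (ps qs : ℝ≥0∞) (hgrad : IsSubgrad2 (fun s t => ThetaL P s t) α β ps⁻¹ qs⁻¹)
    (p q : ℝ) (hp : 0 < p) (hq : 0 < q)
    (n : ℕ) (hn : 1 ≤ n)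
    (f : (Fin n → X) → ℝ) (g : (Fin n → Y) → ℝ)
    (hf : Adm (piM n (m1 P)) f) (hg : Adm (piM n (m2 P)) g)
    (hf1 : ps ≤ ENNReal.ofReal p →
      (((n : ℝ) * α : ℝ) : EReal) ≤ entE (piM n (m1 P)) f p ps)
    (hf2 : ENNReal.ofReal p ≤ ps →
      entE (piM n (m1 P)) f p ps ≤ (((n : ℝ) * α : ℝ) : EReal))
    (hg1 : qs ≤ ENNReal.ofReal q →
      (((n : ℝ) * β : ℝ) : EReal) ≤ entE (piM n (m2 P)) g q qs)
    (hg2 : ENNReal.ofReal q ≤ qs →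
      entE (piM n (m2 P)) g q qs ≤ (((n : ℝ) * β : ℝ) : EReal)) :
    innerFG P n f g ≤
      eexp (((-(n : ℝ) : ℝ) : EReal) * (ThetaL P α β - ((α / p + β / q : ℝ) : EReal)))
        * rnorm (piM n (m1 P)) f p * rnorm (piM n (m2 P)) g q := by
  have hn0 : (0 : ℝ) < n := by exact_mod_cast hn
  have hNf0 := rnorm_ne_zero hf hp
  have hNg0 := rnorm_ne_zero hg hq
  by_cases hbot : ThetaL P α β = ⊥
  · have e : eexp (((-(n : ℝ) : ℝ) : EReal) * (ThetaL P α β - ((α / p + β / q : ℝ) : EReal))) = ⊤ := by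
      rw [hbot, EReal.bot_sub, EReal.coe_mul_bot_of_neg (by linarith)]
      simp [eexp]
    rw [e, ENNReal.top_mul hNf0, ENNReal.top_mul hNg0]
    exact le_top
  have q0 : IsProbabilityMeasure (piM n P) := by unfold piM; infer_instance
  have mf : Measurable (fstv : (Fin n → X × Y) → Fin n → X) :=
    measurable_pi_lambda _ fun i => (measurable_pi_apply i).fst
  have ms : Measurable (sndv : (Fin n → X × Y) → Fin n → Y) :=
    measurable_pi_lambda _ fun i => (measurable_pi_apply i).snd
  have key := trunc_bound P α β ps qs hgrad p q hp hq n hn f g hf hg hf1 hf2 hg1 hg2 hbot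
  have hbound : ∀ k : ℕ, ∫⁻ z, ENNReal.ofReal (trunc f k (fstv z)) *
      ENNReal.ofReal (trunc g k (sndv z)) ∂(piM n P) ≤
      eexp (((-(n : ℝ) : ℝ) : EReal) * (ThetaL P α β - ((α / p + β / q : ℝ) : EReal)))
        * rnorm (piM n (m1 P)) f p * rnorm (piM n (m2 P)) g q := by
    intro k
    have hF0 := trunc_nonneg hf.2.1 k
    have hG0 := trunc_nonneg hg.2.1 k
    have hH0 : ∀ z : Fin n → X × Y, 0 ≤ trunc f k (fstv z) * trunc g k (sndv z) :=
      fun z => mul_nonneg (hF0 _) (hG0 _)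
    have hHi : Integrable (fun z => trunc f k (fstv z) * trunc g k (sndv z)) (piM n P) :=
      integrable_bdd (((trunc_meas hf.1 k).comp mf).mul ((trunc_meas hg.1 k).comp ms))
        (((k : ℝ) + 1) * ((k : ℝ) + 1)) fun z => by
          rw [abs_of_nonneg (hH0 z)]
          exact mul_le_mul (trunc_le k _) (trunc_le k _) (hG0 _) (by positivity)
    have hL : ∫⁻ z, ENNReal.ofReal (trunc f k (fstv z)) *
        ENNReal.ofReal (trunc g k (sndv z)) ∂(piM n P) =
        ENNReal.ofReal (∫ z, trunc f k (fstv z) * trunc g k (sndv z) ∂(piM n P)) := by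
      rw [ofReal_integral_eq_lintegral_ofReal hHi (Eventually.of_forall hH0)]
      congr 1
      ext z
      rw [ENNReal.ofReal_mul (hF0 _)]
    rw [hL]
    rcases (integral_nonneg (μ := piM n P) (f := fun z => trunc f k (fstv z) * trunc g k (sndv z))
      hH0).lt_or_eq with hc | hc
    · obtain ⟨hT, hle⟩ := key k hc
      have e : eexp (((-(n : ℝ) : ℝ) : EReal) * (ThetaL P α β - ((α / p + β / q : ℝ) : EReal))) =
          ENNReal.ofReal (Real.exp (-(n : ℝ) * ((ThetaL P α β).toReal - (α / p + β / q)))) := by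
        conv_lhs => rw [← EReal.coe_toReal hT hbot]
        rw [← EReal.coe_sub, ← EReal.coe_mul, eexp, if_neg (EReal.coe_ne_bot _),
          if_neg (EReal.coe_ne_top _), EReal.toReal_coe]
      rw [e]
      have e0 : ENNReal.ofReal (Real.exp (-(n : ℝ) * ((ThetaL P α β).toReal - (α / p + β / q))))
          ≠ 0 := by
        rw [Ne, ENNReal.ofReal_eq_zero, not_le]; exact Real.exp_pos _
      by_cases htf : rnorm (piM n (m1 P)) f p = ⊤
      · rw [htf, ENNReal.mul_top e0, ENNReal.top_mul hNg0]; exact le_top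
      by_cases htg : rnorm (piM n (m2 P)) g q = ⊤
      · rw [htg, ENNReal.mul_top (mul_ne_zero e0 hNf0)]; exact le_top
      refine (ENNReal.ofReal_le_ofReal (hle htf htg)).trans (le_of_eq ?_)
      rw [ENNReal.ofReal_mul (by positivity), ENNReal.ofReal_mul (by positivity),
        ENNReal.ofReal_toReal htf, ENNReal.ofReal_toReal htg]
    · rw [← hc]; simp
  have hlim : ∀ z : Fin n → X × Y, liminf (fun k => ENNReal.ofReal (trunc f k (fstv z)) *
      ENNReal.ofReal (trunc g k (sndv z))) atTop =
      ENNReal.ofReal (f (fstv z)) * ENNReal.ofReal (g (sndv z)) := by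
    intro z
    apply Tendsto.liminf_eq
    apply tendsto_const_nhds.congr'
    filter_upwards [trunc_eventually hf.2.1 (fstv z), trunc_eventually hg.2.1 (sndv z)] with k h1 h2
    rw [h1, h2]
  unfold innerFG
  simp_rw [← hlim]
  refine (lintegral_liminf_le fun k => (((trunc_meas hf.1 k).comp mf).ennreal_ofReal).mul
    (((trunc_meas hg.1 k).comp ms).ennreal_ofReal)).trans ?_
  exact liminf_le_of_le (by isBoundedDefault) fun b hb => by
    obtain ⟨k, hk⟩ := hb.exists
    exact hk.trans (hbound k)

end BL
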